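/- arXiv:2305.12294 — 2 statements merged into one kernel-verified Lean document; each statement's English description precedes it below -/
import Mathlib

section
/- Let M be an o-minimal structure and let A ⊆ M^{n+1} be a definable set. For c ∈ M^n write A_c = {t ∈ M : (c,t) ∈ A} for the fiber of A over c. Then there exists a natural number k such that for every c ∈ M^n the set cl(A_c) \ A_c has at most k elements, where cl denotes closure in the order topology on M. In particular |cl(A_c)| ≤ |A_c| + k for every c. -/
open FirstOrder FirstOrder.Language Set Cardinal Filter Topology

universe u

/-- A subset of a linear order is a finite union of points and open intervals
with endpoints in `M ∪ {-∞, +∞}` (lower endpoints in `WithBot M = M ∪ {-∞}`,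
upper endpoints in `WithTop M = M ∪ {+∞}`). -/
def IsFinUnionPointsIntervals {M : Type*} [LinearOrder M] (s : Set M) : Prop :=
  ∃ (P : Finset M) (I : Finset (WithBot M × WithTop M)),
    s = ↑P ∪ ⋃ p ∈ I, {x : M | p.1 < (x : WithBot M) ∧ (x : WithTop M) < p.2}

/-- `M` is an o-minimal `L`-structure: the language defines the linear order of `M`,
which is dense and without endpoints, and every subset of `M` definable with parameters
is a finite union of points and open intervals with endpoints in `M ∪ {-∞, +∞}`. -/
structure IsOMinimal (L : FirstOrder.Language) (M : Type*) [L.Structure M] [LinearOrder M] :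
    Prop where
  denselyOrdered : DenselyOrdered M
  noMinOrder : NoMinOrder M
  noMaxOrder : NoMaxOrder M
  definable_lt : (∅ : Set M).Definable L {x : Fin 2 → M | x 0 < x 1}
  tame : ∀ s : Set M, (Set.univ : Set M).Definable₁ L s → IsFinUnionPointsIntervals s

/-!
A definable predicate of one variable is piecewise constant, and a point of `cl(A_c) \ A_c` is one
where membership in `A_c` is not locally constant. These jump points form a definable family of
finite sets, so it suffices to bound the cardinalities in a definable family `Y` of finite subsets
of `M` over `M^n` (uniform finiteness).

Over `M` itself this rests on the generic continuity of definable functions, which comes from the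
monotonicity theorem. If `Y` failed to be locally a continuous curve, or to be locally empty, at
some point above `x` for infinitely many `x`, then the least such point would be a definable
function of `x`; but near the graph of a function that is continuous at `x`, the points of `Y` above
the graph, on it and below it are under control. So for all but finitely many `x` the family is
regular over `x`, and then the cardinality of its fibres is locally constant at `x`.

Over `M^n` the induction runs over integer functions `k` on `M^n × M` whose restrictions to
definable families of curves are locally constant off definable families of finite sets. The
exceptional points over `p`, and the gaps between them, are numbered from left to right. There are
boundedly many by induction; over the `i`-th point `k` restricts to such a function of `p`. On the
`i`-th gap `k` is constant in the last variable, and its value is again such a function of `p`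
because of a Fubini property: if each `r` has only finitely many bad positions `q`, then all but
finitely many `q` are bad for only finitely many `r`.
-/

namespace OMinimal

section Definability

/-- A presentation of `Γ` as a finite Cartesian power of `M`. It lets definability be stated
directly for predicates on `M × M`, `(Fin n → M) × M` and so on. -/
class FinPower (M Γ : Type*) where
  ι : Type
  finite : Finite ι
  coords : Γ ≃ (ι → M)

attribute [instance] FinPower.finite

instance FinPower.self (M : Type*) : FinPower M M where
  ι := Unit
  finite := inferInstance
  coords := (Equiv.funUnique Unit M).symm

instance FinPower.prod (M Γ Δ : Type*) [FinPower M Γ] [FinPower M Δ] : FinPower M (Γ × Δ) where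
  ι := FinPower.ι M Γ ⊕ FinPower.ι M Δ
  finite := inferInstance
  coords := (coords.prodCongr coords).trans (Equiv.sumArrowEquivProdArrow _ _ _).symm

instance FinPower.fin (M : Type*) (n : ℕ) : FinPower M (Fin n → M) where
  ι := Fin n
  finite := inferInstance
  coords := Equiv.refl _

variable (L : FirstOrder.Language) (M : Type*) [L.Structure M]
variable {Γ Δ Θ : Type*} [FinPower M Γ] [FinPower M Δ] [FinPower M Θ]

/-- Definability with parameters of a predicate on a finite power of `M`. It is a class so that
instance resolution follows the syntax of a formula. -/
class IsDefinablePred (P : Γ → Prop) : Prop where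
  definable : (univ : Set M).Definable L {v : FinPower.ι M Γ → M | P (FinPower.coords.symm v)}

/-- Definability with parameters of a map between finite powers of `M`. -/
class IsDefinableMap (f : Γ → Δ) : Prop where
  definable : (univ : Set M).DefinableMap L
    fun v : FinPower.ι M Γ → M => (FinPower.coords (f (FinPower.coords.symm v)) : _ → M)

variable {L M}

theorem IsDefinablePred.congr {P Q : Γ → Prop} (hP : IsDefinablePred L M P)
    (hPQ : ∀ g, P g ↔ Q g) : IsDefinablePred L M Q :=
  (funext fun g => propext (hPQ g) : P = Q) ▸ hP

namespace IsDefinablePred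

instance and {P Q : Γ → Prop} [hP : IsDefinablePred L M P] [hQ : IsDefinablePred L M Q] :
    IsDefinablePred L M (fun g => P g ∧ Q g) :=
  ⟨hP.definable.inter hQ.definable⟩

instance or {P Q : Γ → Prop} [hP : IsDefinablePred L M P] [hQ : IsDefinablePred L M Q] :
    IsDefinablePred L M (fun g => P g ∨ Q g) :=
  ⟨hP.definable.union hQ.definable⟩

instance not {P : Γ → Prop} [hP : IsDefinablePred L M P] : IsDefinablePred L M (fun g => ¬ P g) :=
  ⟨hP.definable.compl⟩

instance imp {P Q : Γ → Prop} [IsDefinablePred L M P] [IsDefinablePred L M Q] :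
    IsDefinablePred L M (fun g => P g → Q g) :=
  congr (P := fun g => ¬ P g ∨ Q g) inferInstance fun _ => imp_iff_not_or.symm

instance iff {P Q : Γ → Prop} [IsDefinablePred L M P] [IsDefinablePred L M Q] :
    IsDefinablePred L M (fun g => P g ↔ Q g) :=
  congr (P := fun g => (P g → Q g) ∧ (Q g → P g)) inferInstance fun _ =>
    iff_iff_implies_and_implies.symm

instance const (p : Prop) : IsDefinablePred L M (fun _ : Γ => p) :=
  ⟨by by_cases h : p <;> simp [h]⟩

instance exists_snd {P : Γ → Δ → Prop} [hP : IsDefinablePred L M fun z : Γ × Δ => P z.1 z.2] :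
    IsDefinablePred L M (fun g => ∃ d, P g d) where
  definable := by
    convert hP.definable.exists_of_finite using 1
    ext v
    exact FinPower.coords.exists_congr_left

instance forall_snd {P : Γ → Δ → Prop} [IsDefinablePred L M fun z : Γ × Δ => P z.1 z.2] :
    IsDefinablePred L M (fun g => ∀ d, P g d) :=
  congr (P := fun g => ¬ ∃ d, ¬ P g d) inferInstance fun _ => not_exists_not

end IsDefinablePred

theorem IsDefinablePred.exists_mem_finset {β : Type*} (S : Finset β) {P : Γ → β → Prop}
    (hP : ∀ b, IsDefinablePred L M fun g => P g b) :
    IsDefinablePred L M (fun g => ∃ b ∈ S, P g b) where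
  definable := by
    convert definable_biUnion_finset (fun b => (hP b).definable) S using 1
    ext v
    simp

theorem IsDefinablePred.comp {P : Δ → Prop} (hP : IsDefinablePred L M P) {f : Γ → Δ}
    (hf : IsDefinableMap L M f) : IsDefinablePred L M (fun g => P (f g)) where
  definable := by simpa [preimage] using hP.definable.preimage_map hf.definable

instance (priority := low) IsDefinablePred.apply {P : Δ → Prop} {f : Γ → Δ}
    [hP : IsDefinablePred L M P] [hf : IsDefinableMap L M f] :
    IsDefinablePred L M (fun g => P (f g)) :=
  hP.comp hf

namespace IsDefinableMap

theorem of_coords_comp {f : Γ → Δ} (σ : FinPower.ι M Δ → FinPower.ι M Γ)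
    (hf : ∀ g i, (FinPower.coords (f g) : _ → M) i = (FinPower.coords g : _ → M) (σ i)) :
    IsDefinableMap L M f where
  definable i := by simpa only [hf, Equiv.apply_symm_apply] using DefinableFun.proj L

instance id : IsDefinableMap L M (fun g : Γ => g) :=
  of_coords_comp _root_.id fun _ _ => rfl

instance const (d : Δ) : IsDefinableMap L M (fun _ : Γ => d) where
  definable _ := L.definableFun_const _ (mem_univ _)

theorem comp {f : Δ → Θ} {h : Γ → Δ} (hf : IsDefinableMap L M f) (hh : IsDefinableMap L M h) :
    IsDefinableMap L M (fun g => f (h g)) where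
  definable i := by simpa using (hf.definable i).comp hh.definable

instance (priority := low) apply {f : Δ → Θ} {h : Γ → Δ} [hf : IsDefinableMap L M f]
    [hh : IsDefinableMap L M h] : IsDefinableMap L M (fun g => f (h g)) :=
  hf.comp hh

instance prod_fst : IsDefinableMap L M (Prod.fst : Γ × Δ → Γ) :=
  of_coords_comp Sum.inl fun _ _ => rfl

instance prod_snd : IsDefinableMap L M (Prod.snd : Γ × Δ → Δ) :=
  of_coords_comp Sum.inr fun _ _ => rfl

instance fst {f : Γ → Δ × Θ} [hf : IsDefinableMap L M f] : IsDefinableMap L M (fun g => (f g).1) :=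
  prod_fst.comp hf

instance snd {f : Γ → Δ × Θ} [hf : IsDefinableMap L M f] : IsDefinableMap L M (fun g => (f g).2) :=
  prod_snd.comp hf

instance prodMk {f : Γ → Δ} {h : Γ → Θ} [hf : IsDefinableMap L M f] [hh : IsDefinableMap L M h] :
    IsDefinableMap L M (fun g => (f g, h g)) where
  definable
    | Sum.inl i => hf.definable i
    | Sum.inr i => hh.definable i

instance prodMk_left (g : Γ) : IsDefinableMap L M (Prod.mk g : Δ → Γ × Δ) :=
  prodMk (f := fun _ => g) (h := fun d => d)

instance finSnoc {n : ℕ} :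
    IsDefinableMap L M (fun z : (Fin n → M) × M => (Fin.snoc z.1 z.2 : Fin (n + 1) → M)) :=
  of_coords_comp (Fin.snoc (α := fun _ => Fin n ⊕ Unit) Sum.inl (Sum.inr ())) fun z i => by
    cases i using Fin.lastCases <;>
      simp [FinPower.coords, Equiv.sumArrowEquivProdArrow]

end IsDefinableMap

instance IsDefinablePred.eq {f h : Γ → M} [hf : IsDefinableMap L M f] [hh : IsDefinableMap L M h] :
    IsDefinablePred L M (fun g => f g = h g) :=
  ⟨(hf.definable ()).ofPred_eq (hh.definable ())⟩

theorem IsDefinableMap.of_graph {f : Γ → M}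
    (h : IsDefinablePred L M fun z : Γ × M => f z.1 = z.2) : IsDefinableMap L M f where
  definable _ := h.definable.preimage_comp (Sum.elim some fun _ => none)

theorem IsDefinableMap.epsilon [Nonempty M] {R : Γ → M → Prop}
    [hR : IsDefinablePred L M fun z : Γ × M => R z.1 z.2]
    (huniq : ∀ g m m', R g m → R g m' → m = m') :
    IsDefinableMap L M (fun g => Classical.epsilon (R g)) := by
  have : IsDefinablePred L M fun w : (Γ × M) × M => R w.1.1 w.2 :=
    hR.comp (f := fun w : (Γ × M) × M => (w.1.1, w.2)) inferInstance
  refine of_graph <| IsDefinablePred.congr (P := fun z : Γ × M =>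
    R z.1 z.2 ∨ (¬ ∃ m, R z.1 m) ∧ Classical.epsilon (fun _ : M => False) = z.2) inferInstance ?_
  rintro ⟨g, m⟩
  by_cases h : ∃ m, R g m
  · simp only [h, not_true_eq_false, false_and, or_false]
    exact ⟨huniq g _ m (Classical.epsilon_spec h), fun hm => hm ▸ Classical.epsilon_spec h⟩
  · have hempty : R g = fun _ => False := funext fun m => eq_false fun hm => h ⟨m, hm⟩
    simp [hempty]

variable (L M) in
/-- Uniform definability of a family of subsets of `M`. -/
class IsDefinableFamily (Y : Γ → Set M) : Prop where
  isDefinablePred_mem : IsDefinablePred L M fun z : Γ × M => z.2 ∈ Y z.1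

theorem IsDefinableFamily.comp {Y : Δ → Set M} (hY : IsDefinableFamily L M Y) {f : Γ → Δ}
    (hf : IsDefinableMap L M f) : IsDefinableFamily L M (fun g => Y (f g)) :=
  ⟨hY.isDefinablePred_mem.comp (.prodMk (hf := hf.comp .prod_fst) (hh := .prod_snd))⟩

instance (priority := low) IsDefinableFamily.apply {Y : Δ → Set M} {f : Γ → Δ}
    [hY : IsDefinableFamily L M Y] [hf : IsDefinableMap L M f] :
    IsDefinableFamily L M (fun g => Y (f g)) :=
  hY.comp hf

section IsDefinableFamily

variable {Y Z : Γ → Set M} [hY : IsDefinableFamily L M Y]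

instance IsDefinablePred.mem {f : Γ → M} [IsDefinableMap L M f] :
    IsDefinablePred L M (fun g => f g ∈ Y g) :=
  hY.isDefinablePred_mem.comp (f := fun g => (g, f g)) inferInstance

instance IsDefinableFamily.setOf {P : Γ → M → Prop}
    [hP : IsDefinablePred L M fun z : Γ × M => P z.1 z.2] :
    IsDefinableFamily L M (fun g => {m | P g m}) :=
  ⟨hP⟩

instance IsDefinableFamily.inter [IsDefinableFamily L M Z] :
    IsDefinableFamily L M (fun g => Y g ∩ Z g) :=
  ⟨inferInstanceAs (IsDefinablePred L M fun z : Γ × M => z.2 ∈ Y z.1 ∧ z.2 ∈ Z z.1)⟩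

instance IsDefinableFamily.sdiff_singleton {f : Γ → M} [IsDefinableMap L M f] :
    IsDefinableFamily L M (fun g => Y g \ {f g}) :=
  ⟨inferInstanceAs (IsDefinablePred L M fun z : Γ × M => z.2 ∈ Y z.1 ∧ ¬ z.2 = f z.1)⟩

instance IsDefinablePred.nonempty : IsDefinablePred L M (fun g => (Y g).Nonempty) :=
  inferInstanceAs (IsDefinablePred L M fun g => ∃ m, m ∈ Y g)

instance IsDefinablePred.subsingleton : IsDefinablePred L M (fun g => (Y g).Subsingleton) :=
  congr (P := fun g => ∀ m m', m ∈ Y g → m' ∈ Y g → m = m') inferInstance fun _ =>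
    ⟨fun h _ hm _ hm' => h _ _ hm hm', fun h _ _ hm hm' => h hm hm'⟩

end IsDefinableFamily

theorem IsDefinablePred.natCast_le_encard {M Γ : Type u} [L.Structure M] [FinPower M Γ]
    {Y : Γ → Set M} [IsDefinableFamily L M Y] (j : ℕ) :
    IsDefinablePred L M (fun g => (j : ℕ∞) ≤ (Y g).encard) := by
  induction j generalizing Γ Y with
  | zero => simpa using const True
  | succ j ih =>
    have := ih (Y := fun z : Γ × M => Y z.1 \ {z.2})
    refine congr (P := fun g => ∃ m, m ∈ Y g ∧ (j : ℕ∞) ≤ (Y g \ {m}).encard) inferInstance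
      fun g => ⟨?_, fun h => ?_⟩
    · rintro ⟨m, hm, hj⟩
      rw [← encard_sdiff_singleton_add_one hm]
      exact_mod_cast add_le_add_left hj 1
    · obtain ⟨m, hm⟩ : (Y g).Nonempty := encard_ne_zero.1 fun h0 => by simp [h0] at h
      rw [← encard_sdiff_singleton_add_one hm] at h
      exact ⟨m, hm, by simpa using h⟩

theorem IsDefinablePred.ncard_eq {M Γ : Type u} [L.Structure M] [FinPower M Γ]
    {Y : Γ → Set M} [IsDefinableFamily L M Y] (hfin : ∀ g, (Y g).Finite) (n : ℕ) :
    IsDefinablePred L M (fun g => (Y g).ncard = n) := by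
  have := natCast_le_encard (L := L) (Y := Y)
  refine congr (P := fun g => (n : ℕ∞) ≤ (Y g).encard ∧ ¬ ((n + 1 : ℕ) : ℕ∞) ≤ (Y g).encard)
    inferInstance fun g => ?_
  rw [← (hfin g).cast_ncard_eq]
  norm_cast
  omega

end Definability

section PiecewiseConst

variable {M S T U : Type*} [LinearOrder M]

/-- `k` takes finitely many values, each on a finite union of points and intervals: it is constant
on every closed interval missing some fixed finite set. For predicates (`S = Prop`) this is a form
of `IsFinUnionPointsIntervals` that is visibly invariant under reversal of the order. -/
def PiecewiseConst (k : M → S) : Prop :=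
  ∃ F : Set M, F.Finite ∧ ∀ x y, Disjoint F (uIcc x y) → k x = k y

namespace PiecewiseConst

theorem const (s : S) : PiecewiseConst (fun _ : M => s) :=
  ⟨∅, finite_empty, fun _ _ _ => rfl⟩

theorem map₂ (φ : S → T → U) {k : M → S} {l : M → T} (hk : PiecewiseConst k)
    (hl : PiecewiseConst l) : PiecewiseConst (fun x => φ (k x) (l x)) := by
  obtain ⟨F, hF, hkF⟩ := hk
  obtain ⟨G, hG, hlG⟩ := hl
  refine ⟨F ∪ G, hF.union hG, fun x y hxy => ?_⟩
  rw [disjoint_union_left] at hxy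
  simp only [hkF x y hxy.1, hlG x y hxy.2]

theorem eq_const (a : M) : PiecewiseConst (fun x => x = a) := by
  refine ⟨{a}, finite_singleton a, fun x y hxy => ?_⟩
  rw [disjoint_singleton_left] at hxy
  have hx : x ≠ a := fun h => hxy (h ▸ left_mem_uIcc)
  have hy : y ≠ a := fun h => hxy (h ▸ right_mem_uIcc)
  simp only [hx, hy]

theorem const_lt (a : M) : PiecewiseConst (fun x => a < x) := by
  refine ⟨{a}, finite_singleton a, fun x y hxy => propext ?_⟩
  rw [disjoint_singleton_left, mem_uIcc] at hxy
  grind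

theorem lt_const (a : M) : PiecewiseConst (fun x => x < a) := by
  refine ⟨{a}, finite_singleton a, fun x y hxy => propext ?_⟩
  rw [disjoint_singleton_left, mem_uIcc] at hxy
  grind

theorem exists_mem_finset {β : Type*} (A : Finset β) {D : β → M → Prop}
    (hD : ∀ b, PiecewiseConst (D b)) : PiecewiseConst (fun x => ∃ b ∈ A, D b x) := by
  classical
  induction A using Finset.induction_on with
  | empty => simpa using const False
  | insert b A _ ih => simpa using (hD b).map₂ Or ih

theorem between (p : WithBot M × WithTop M) :
    PiecewiseConst (fun x : M => p.1 < (x : WithBot M) ∧ (x : WithTop M) < p.2) := by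
  obtain ⟨a, b⟩ := p
  refine map₂ And ?_ ?_
  · induction a with
    | bot => simpa using const True
    | coe a => simpa using const_lt a
  · induction b with
    | top => simpa using const True
    | coe b => simpa using lt_const b

theorem of_isFinUnionPointsIntervals {s : Set M} (hs : IsFinUnionPointsIntervals s) :
    PiecewiseConst (· ∈ s) := by
  obtain ⟨P, I, rfl⟩ := hs
  convert (exists_mem_finset P eq_const).map₂ Or (exists_mem_finset I between) using 2
  simp only [mem_union, Finset.mem_coe, exists_eq_right', mem_iUnion, exists_prop, mem_ofPred_eq]

theorem dual {k : M → S} (hk : PiecewiseConst k) :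
    PiecewiseConst (fun x : Mᵒᵈ => k (OrderDual.ofDual x)) := by
  obtain ⟨F, hF, hkF⟩ := hk
  refine ⟨OrderDual.ofDual ⁻¹' F, hF.preimage OrderDual.ofDual.injective.injOn, fun x y hxy => ?_⟩
  exact hkF _ _ (uIcc_ofDual x y ▸ hxy.preimage OrderDual.toDual)

theorem finite_range {k : M → S} (hk : PiecewiseConst k) : (range k).Finite := by
  obtain ⟨F, hF, hkF⟩ := hk
  let cell : M → Set M × Set M := fun x => (F ∩ Iio x, F ∩ Iic x)
  have eq_of_cell_eq : ∀ x y, x ≤ y → cell x = cell y → k x = k y := by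
    intro x y hxy hcell
    by_cases hdisj : Disjoint F (uIcc x y)
    · exact hkF x y hdisj
    obtain ⟨z, hzF, hz⟩ := not_disjoint_iff.1 hdisj
    rw [uIcc_of_le hxy] at hz
    have hzx : z ∈ F ∩ Iic x := (congrArg Prod.snd hcell).ge ⟨hzF, hz.2⟩
    have hzy : z ∉ F ∩ Iio y := fun h => ((congrArg Prod.fst hcell).ge h).2.not_ge hz.1
    have hyx : y ≤ x := (not_lt.1 fun h => hzy ⟨hzF, h⟩).trans hzx.2
    rw [le_antisymm hxy hyx]
  have factors : k.FactorsThrough cell := fun x y hcell =>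
    (le_total x y).elim (eq_of_cell_eq x y · hcell) fun h => (eq_of_cell_eq y x h hcell.symm).symm
  have finite_cells : (range cell).Finite :=
    (hF.finite_subsets.prod hF.finite_subsets).subset <| range_subset_iff.2 fun x =>
      ⟨inter_subset_left, inter_subset_left⟩
  obtain hM | ⟨⟨x⟩⟩ := isEmpty_or_nonempty M
  · simp [range_eq_empty]
  · rw [← factors.extend_comp (fun _ => k x), range_comp]
    exact finite_cells.image _

end PiecewiseConst

variable [TopologicalSpace M]

/-- `k` is constant on a neighbourhood of `z`. -/
def IsLocallyConstAt (k : M → S) (z : M) : Prop :=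
  ∀ᶠ y in 𝓝 z, k y = k z

variable [OrderTopology M]

theorem eventually_nhds_iff [NoMinOrder M] [NoMaxOrder M] {a : M} {P : M → Prop} :
    (∀ᶠ x in 𝓝 a, P x) ↔ ∃ u v, u < a ∧ a < v ∧ ∀ x, u < x → x < v → P x := by
  simp only [Filter.Eventually, mem_nhds_iff_exists_Ioo_subset, mem_Ioo, and_assoc, subset_def,
    and_imp, mem_ofPred_eq]

theorem eventually_nhdsGT_iff [NoMaxOrder M] {a : M} {P : M → Prop} :
    (∀ᶠ x in 𝓝[>] a, P x) ↔ ∃ v, a < v ∧ ∀ x, a < x → x < v → P x := by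
  simp only [Filter.Eventually, mem_nhdsGT_iff_exists_Ioo_subset, mem_Ioo, mem_Ioi, subset_def,
    and_imp, mem_ofPred_eq]

theorem eventually_nhdsLT_iff [NoMinOrder M] {a : M} {P : M → Prop} :
    (∀ᶠ x in 𝓝[<] a, P x) ↔ ∃ u, u < a ∧ ∀ x, u < x → x < a → P x := by
  simp only [Filter.Eventually, mem_nhdsLT_iff_exists_Ioo_subset, mem_Ioo, mem_Iio, subset_def,
    and_imp, mem_ofPred_eq]

namespace PiecewiseConst

theorem eventually_isLocallyConstAt [NoMinOrder M] [NoMaxOrder M] {k : M → S}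
    (hk : PiecewiseConst k) : ∀ᶠ z in cofinite, IsLocallyConstAt k z := by
  obtain ⟨F, hF, hkF⟩ := hk
  filter_upwards [hF.compl_mem_cofinite] with z hz
  obtain ⟨u, v, hz', huv⟩ := mem_nhds_iff_exists_Ioo_subset.1 (hF.isClosed.isOpen_compl.mem_nhds hz)
  filter_upwards [Ioo_mem_nhds hz'.1 hz'.2] with y hy
  exact hkF y z <| disjoint_right.2 fun x hx => huv (ordConnected_Ioo.uIcc_subset hy hz' hx)

theorem exists_eventually_of_infinite [NoMinOrder M] [NoMaxOrder M] {D : M → Prop}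
    (hD : PiecewiseConst D) (hinf : {x | D x}.Infinite) : ∃ z, ∀ᶠ x in 𝓝 z, D x := by
  obtain ⟨z, hDz, hz⟩ := hinf.exists_notMem_finite hD.eventually_isLocallyConstAt
  exact ⟨z, (not_not.1 hz).mono fun x hx => hx ▸ hDz⟩

theorem eventually_cofinite_of_dense [NoMinOrder M] [NoMaxOrder M] {D : M → Prop}
    (hD : PiecewiseConst D) (hdense : ∀ a b, a < b → ∃ x ∈ Ioo a b, D x) :
    ∀ᶠ x in cofinite, D x := by
  refine not_infinite.1 fun hinf => ?_
  obtain ⟨z, hz⟩ := (hD.map₂ (fun p _ => ¬ p) (const ())).exists_eventually_of_infinite hinf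
  obtain ⟨a, b, haz, hzb, hab⟩ := eventually_nhds_iff.1 hz
  obtain ⟨x, hx, hDx⟩ := hdense a b (haz.trans hzb)
  exact hab x hx.1 hx.2 hDx

theorem exists_eqOn_Ioo [NoMaxOrder M] {k : M → S} (hk : PiecewiseConst k) (a : M) :
    ∃ b > a, ∀ x ∈ Ioo a b, ∀ y ∈ Ioo a b, k x = k y := by
  obtain ⟨F, hF, hkF⟩ := hk
  have miss : ∀ᶠ x in 𝓝[>] a, ∀ z ∈ F, a < z → x < z :=
    (eventually_all_finite hF).2 fun z _ => by
      by_cases haz : a < z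
      · filter_upwards [nhdsWithin_le_nhds (eventually_lt_nhds haz)] with x hx _ using hx
      · exact .of_forall fun x h => absurd h haz
  obtain ⟨b, hab, hb⟩ := eventually_nhdsGT_iff.1 miss
  refine ⟨b, hab, fun x hx y hy => hkF x y (disjoint_left.2 fun z hzF hz => ?_)⟩
  have hz' : z ∈ Ioo a b := ordConnected_Ioo.uIcc_subset hx hy hz
  exact lt_irrefl z (hb z hz'.1 hz'.2 z hzF hz'.1)

variable [DenselyOrdered M]

theorem eventually_or_eventually_not_nhdsGT [NoMaxOrder M] {D : M → Prop} (hD : PiecewiseConst D)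
    (a : M) : (∀ᶠ y in 𝓝[>] a, D y) ∨ ∀ᶠ y in 𝓝[>] a, ¬ D y := by
  obtain ⟨b, hab, hb⟩ := hD.exists_eqOn_Ioo a
  obtain ⟨c, hc⟩ := exists_between hab
  by_cases hDc : D c
  · exact .inl <| eventually_nhdsGT_iff.2 ⟨b, hab, fun x hax hxb => hb c hc x ⟨hax, hxb⟩ ▸ hDc⟩
  · exact .inr <| eventually_nhdsGT_iff.2 ⟨b, hab, fun x hax hxb => hb c hc x ⟨hax, hxb⟩ ▸ hDc⟩

theorem eventually_or_eventually_not_nhdsLT [NoMinOrder M] {D : M → Prop} (hD : PiecewiseConst D)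
    (a : M) : (∀ᶠ y in 𝓝[<] a, D y) ∨ ∀ᶠ y in 𝓝[<] a, ¬ D y :=
  hD.dual.eventually_or_eventually_not_nhdsGT (OrderDual.toDual a)

variable [NoMinOrder M] [NoMaxOrder M]

theorem exists_mem_uIcc_eq {k : M → S} {w x : M} (hw : IsLocallyConstAt k w) (hxw : x ≠ w) :
    ∃ y ∈ uIcc x w, w ∉ uIcc x y ∧ k y = k w := by
  rcases hxw.lt_or_gt with hxw | hxw
  · obtain ⟨y, hky, hy⟩ :=
      ((hw.filter_mono nhdsWithin_le_nhds).and (Ioo_mem_nhdsLT hxw)).exists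
    exact ⟨y, mem_uIcc_of_le hy.1.le hy.2.le, notMem_uIcc_of_gt hxw hy.2, hky⟩
  · obtain ⟨y, hky, hy⟩ :=
      ((hw.filter_mono nhdsWithin_le_nhds).and (Ioo_mem_nhdsGT hxw)).exists
    exact ⟨y, mem_uIcc_of_ge hy.1.le hy.2.le, notMem_uIcc_of_lt hxw hy.1, hky⟩

theorem eq_of_disjoint_of_insert {k : M → S} {w : M} {F : Set M}
    (hkF : ∀ x y, Disjoint (insert w F) (uIcc x y) → k x = k y) (hw : IsLocallyConstAt k w)
    {x y : M} (hxy : Disjoint F (uIcc x y)) : k x = k y := by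
  have eq_w : ∀ x, Disjoint F (uIcc x w) → k x = k w := by
    intro x hxw
    obtain rfl | hne := eq_or_ne x w
    · rfl
    obtain ⟨y, hy, hwy, hky⟩ := exists_mem_uIcc_eq hw hne
    rw [← hky]
    exact hkF x y (disjoint_insert_left.2 ⟨hwy, hxw.mono_right (uIcc_subset_uIcc_left hy)⟩)
  by_cases hwxy : w ∈ uIcc x y
  · rw [eq_w x (hxy.mono_right (uIcc_subset_uIcc_left hwxy)),
      eq_w y (hxy.mono_right (uIcc_comm w y ▸ uIcc_subset_uIcc_right hwxy))]
  · exact hkF x y (disjoint_insert_left.2 ⟨hwxy, hxy⟩)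

theorem eq_of_isLocallyConstAt {k : M → S} (hk : PiecewiseConst k) {a b : M}
    (hab : ∀ z ∈ uIcc a b, IsLocallyConstAt k z) : k a = k b := by
  obtain ⟨F, hF, hkF⟩ := hk
  have drop : ∀ G : Set M, G.Finite → (∀ z ∈ G, IsLocallyConstAt k z) →
      ∀ B : Set M, (∀ x y, Disjoint (G ∪ B) (uIcc x y) → k x = k y) →
        ∀ x y, Disjoint B (uIcc x y) → k x = k y := by
    intro G hG
    induction G, hG using Set.Finite.induction_on with
    | empty => simp
    | insert _ _ ih =>
      intro hG B hB
      refine ih (fun z hz => hG z (mem_insert_of_mem _ hz)) B fun x y => ?_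
      exact eq_of_disjoint_of_insert (insert_union ▸ hB) (hG _ (mem_insert _ _))
  refine drop (F ∩ {z | IsLocallyConstAt k z}) (hF.inter_of_left _) (fun z hz => hz.2)
    (F \ {z | IsLocallyConstAt k z}) ?_ a b (disjoint_left.2 fun z hz hzab => hz.2 (hab z hzab))
  rwa [inter_union_sdiff]

theorem of_fibers {k : M → S} (hk : ∀ s, PiecewiseConst (fun x => k x = s))
    (hlc : ∀ᶠ z in cofinite, IsLocallyConstAt k z) : PiecewiseConst k := by
  refine ⟨_, eventually_cofinite.1 hlc, fun x y hxy => ?_⟩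
  have level_const : (k x = k y) = (k y = k y) :=
    (hk (k y)).eq_of_isLocallyConstAt fun z hz =>
      (not_not.1 (disjoint_right.1 hxy hz)).mono fun w hw => congrArg (· = k y) hw
  exact level_const ▸ rfl

theorem exists_isLUB {s : Set M} (hs : PiecewiseConst (· ∈ s)) (hlower : IsLowerSet s)
    (hne : s.Nonempty) (hbdd : BddAbove s) : ∃ z, IsLUB s z := by
  obtain ⟨a, ha⟩ := hne
  obtain ⟨c, hc⟩ := hbdd
  obtain ⟨b, hcb⟩ := exists_gt c
  have hb : b ∉ s := fun h => hcb.not_ge (hc h)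
  obtain ⟨z, hz⟩ : ∃ z, ¬ IsLocallyConstAt (· ∈ s) z := by
    by_contra! hlc
    exact hb ((hs.eq_of_isLocallyConstAt fun z _ => hlc z : (a ∈ s) = (b ∈ s)) ▸ ha)
  refine ⟨z, fun y hy => not_lt.1 fun hzy => hz ?_, fun y hy => not_lt.1 fun hyz => hz ?_⟩
  · filter_upwards [eventually_lt_nhds hzy] with x hx
    simp only [hlower hx.le hy, hlower hzy.le hy]
  · have notMem : ∀ x, y < x → x ∉ s := fun x hyx hxs => hyx.not_ge (hy hxs)
    filter_upwards [eventually_gt_nhds hyz] with x hx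
    simp only [notMem x hx, notMem z hyz]

end PiecewiseConst

end PiecewiseConst

section OMinimalOrder

variable (L : FirstOrder.Language) (M : Type*) [L.Structure M] [LinearOrder M]

/-- O-minimality in a form invariant under reversal of the order: the order is definable, and
definable predicates in one variable are piecewise constant. -/
class OMinimalOrder : Prop where
  isDefinablePred_lt : IsDefinablePred L M fun z : M × M => z.1 < z.2
  piecewiseConst_of_isDefinablePred : ∀ {D : M → Prop}, IsDefinablePred L M D → PiecewiseConst D

variable {L M} in
theorem OMinimalOrder.of_isOMinimal (hM : IsOMinimal L M) : OMinimalOrder L M where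
  isDefinablePred_lt :=
    ⟨(hM.definable_lt.mono (empty_subset univ)).preimage_comp ![Sum.inl (), Sum.inr ()]⟩
  piecewiseConst_of_isDefinablePred {D} hD :=
    .of_isFinUnionPointsIntervals <| hM.tame {x | D x} <| hD.definable.preimage_comp fun _ => 0

/-- The structure `M` with its order reversed. -/
local instance dualStructure : L.Structure Mᵒᵈ := ‹L.Structure M›

variable [OMinimalOrder L M]

instance OMinimalOrder.dual : OMinimalOrder L Mᵒᵈ where
  isDefinablePred_lt :=
    (isDefinablePred_lt (L := L) (M := M)).comp (f := fun z : M × M => (z.2, z.1)) inferInstance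
  piecewiseConst_of_isDefinablePred hD :=
    (piecewiseConst_of_isDefinablePred (L := L) (M := M) hD).dual

variable {M} in
theorem IsDefinablePred.piecewiseConst (D : M → Prop) [hD : IsDefinablePred L M D] :
    PiecewiseConst D :=
  OMinimalOrder.piecewiseConst_of_isDefinablePred hD

variable {L M} {Γ : Type*} [FinPower M Γ]

namespace IsDefinablePred

instance lt {f h : Γ → M} [IsDefinableMap L M f] [IsDefinableMap L M h] :
    IsDefinablePred L M (fun g => f g < h g) :=
  OMinimalOrder.isDefinablePred_lt.comp (f := fun g => (f g, h g)) inferInstance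

instance le {f h : Γ → M} [IsDefinableMap L M f] [IsDefinableMap L M h] :
    IsDefinablePred L M (fun g => f g ≤ h g) :=
  congr (P := fun g => ¬ h g < f g) inferInstance fun _ => not_lt

instance lt_left (a : M) : IsDefinablePred L M (LT.lt a) :=
  lt (f := fun _ : M => a) (h := fun x => x)

instance isLeast {Y : Γ → Set M} [IsDefinableFamily L M Y] {f : Γ → M} [IsDefinableMap L M f] :
    IsDefinablePred L M (fun g => IsLeast (Y g) (f g)) :=
  congr (P := fun g => f g ∈ Y g ∧ ∀ m, m ∈ Y g → f g ≤ m) inferInstance fun _ => Iff.rfl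

end IsDefinablePred

namespace IsDefinableFamily

variable {f h : Γ → M} [IsDefinableMap L M f] [IsDefinableMap L M h]

instance Iio : IsDefinableFamily L M (fun g => Iio (f g)) :=
  ⟨inferInstanceAs (IsDefinablePred L M fun z : Γ × M => z.2 < f z.1)⟩

instance Ioi : IsDefinableFamily L M (fun g => Ioi (f g)) :=
  ⟨inferInstanceAs (IsDefinablePred L M fun z : Γ × M => f z.1 < z.2)⟩

instance Iic : IsDefinableFamily L M (fun g => Iic (f g)) :=
  ⟨inferInstanceAs (IsDefinablePred L M fun z : Γ × M => z.2 ≤ f z.1)⟩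

instance Ioo : IsDefinableFamily L M (fun g => Ioo (f g) (h g)) :=
  ⟨inferInstanceAs (IsDefinablePred L M fun z : Γ × M => f z.1 < z.2 ∧ z.2 < h z.1)⟩

instance Ioc : IsDefinableFamily L M (fun g => Ioc (f g) (h g)) :=
  ⟨inferInstanceAs (IsDefinablePred L M fun z : Γ × M => f z.1 < z.2 ∧ z.2 ≤ h z.1)⟩

end IsDefinableFamily

namespace IsDefinablePred

variable [TopologicalSpace M] [OrderTopology M]

instance eventually_nhdsGT [NoMaxOrder M] {f : Γ → M} {P : Γ → M → Prop} [IsDefinableMap L M f]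
    [hP : IsDefinablePred L M fun z : Γ × M => P z.1 z.2] :
    IsDefinablePred L M (fun g => ∀ᶠ x in 𝓝[>] f g, P g x) := by
  have : IsDefinablePred L M fun z : (Γ × M) × M => P z.1.1 z.2 :=
    hP.comp (f := fun z : (Γ × M) × M => (z.1.1, z.2)) inferInstance
  exact congr (P := fun g => ∃ v, f g < v ∧ ∀ x, f g < x → x < v → P g x) inferInstance
    fun _ => eventually_nhdsGT_iff.symm

instance eventually_nhdsLT [NoMinOrder M] {f : Γ → M} {P : Γ → M → Prop} [IsDefinableMap L M f]
    [hP : IsDefinablePred L M fun z : Γ × M => P z.1 z.2] :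
    IsDefinablePred L M (fun g => ∀ᶠ x in 𝓝[<] f g, P g x) := by
  have : IsDefinablePred L M fun z : (Γ × M) × M => P z.1.1 z.2 :=
    hP.comp (f := fun z : (Γ × M) × M => (z.1.1, z.2)) inferInstance
  exact congr (P := fun g => ∃ u, u < f g ∧ ∀ x, u < x → x < f g → P g x) inferInstance
    fun _ => eventually_nhdsLT_iff.symm

instance eventually_nhds [NoMinOrder M] [NoMaxOrder M] {f : Γ → M} {P : Γ → M → Prop}
    [IsDefinableMap L M f] [hP : IsDefinablePred L M fun z : Γ × M => P z.1 z.2] :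
    IsDefinablePred L M (fun g => ∀ᶠ x in 𝓝 (f g), P g x) := by
  have : IsDefinablePred L M fun z : ((Γ × M) × M) × M => P z.1.1.1 z.2 :=
    hP.comp (f := fun z : ((Γ × M) × M) × M => (z.1.1.1, z.2)) inferInstance
  exact congr (P := fun g => ∃ u v, u < f g ∧ f g < v ∧ ∀ x, u < x → x < v → P g x) inferInstance
    fun _ => eventually_nhds_iff.symm

instance isLocallyConstAt [NoMinOrder M] [NoMaxOrder M] {P : Γ → M → Prop} {f : Γ → M}
    [IsDefinableMap L M f] [hP : IsDefinablePred L M fun z : Γ × M => P z.1 z.2] :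
    IsDefinablePred L M (fun g => IsLocallyConstAt (P g) (f g)) := by
  have : IsDefinablePred L M fun z : Γ × M => P z.1 (f z.1) :=
    hP.comp (f := fun z : Γ × M => (z.1, f z.1)) inferInstance
  exact congr (P := fun g => ∀ᶠ x in 𝓝 (f g), (P g x ↔ P g (f g))) inferInstance fun _ => by
    simp only [IsLocallyConstAt, eq_iff_iff]

instance continuousAt [NoMinOrder M] [NoMaxOrder M] {f : M → M} [IsDefinableMap L M f] :
    IsDefinablePred L M (fun x => ContinuousAt f x) := by
  have lower : IsDefinablePred L M fun z : M × M => ∀ᶠ y in 𝓝 z.1, z.2 < f y := inferInstance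
  have upper : IsDefinablePred L M fun z : M × M => ∀ᶠ y in 𝓝 z.1, z.2 > f y := inferInstance
  exact congr (P := fun x => (∀ a, a < f x → ∀ᶠ y in 𝓝 x, a < f y) ∧
    ∀ a, a > f x → ∀ᶠ y in 𝓝 x, a > f y) inferInstance fun _ => tendsto_order.symm

end IsDefinablePred

variable [TopologicalSpace M] [OrderTopology M] [DenselyOrdered M] [NoMinOrder M] [NoMaxOrder M]

variable (L) in
theorem exists_isLUB {s : Set M} [IsDefinablePred L M (· ∈ s)] (hne : s.Nonempty)
    (hbdd : BddAbove s) : ∃ z, IsLUB s z := by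
  have hlower : PiecewiseConst fun x => ∃ y, y ∈ s ∧ x ≤ y := IsDefinablePred.piecewiseConst L _
  simpa only [IsLUB, upperBounds_lowerClosure] using PiecewiseConst.exists_isLUB
    (s := lowerClosure s) hlower (lowerClosure s).lower (hne.mono subset_lowerClosure)
    (bddAbove_lowerClosure.2 hbdd)

variable (L) in
theorem exists_isGLB {s : Set M} [h : IsDefinablePred L M (· ∈ s)] (hne : s.Nonempty)
    (hbdd : BddBelow s) : ∃ z, IsGLB s z :=
  haveI : IsDefinablePred L Mᵒᵈ (· ∈ OrderDual.ofDual ⁻¹' s) := h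
  exists_isLUB L (M := Mᵒᵈ) (s := OrderDual.ofDual ⁻¹' s) hne hbdd.dual

end OMinimalOrder

section Monotonicity

theorem eventually_gt_of_not_lt_of_injOn {M N : Type*} [LinearOrder M] [TopologicalSpace M]
    [OrderTopology M] [LinearOrder N] {f : M → N} {a b x : M} (hinj : InjOn f (Ioo a b))
    (hx : x ∈ Ioo a b) {l : Filter M} (hl : l ≤ 𝓝[≠] x) (hle : ∀ᶠ y in l, ¬ f x < f y) :
    ∀ᶠ y in l, f y < f x := by
  filter_upwards [hle, hl eventually_mem_nhdsWithin, hl (mem_nhdsWithin_of_mem_nhds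
    (Ioo_mem_nhds hx.1 hx.2))] with y hxy hne hy
  exact (not_lt.1 hxy).lt_of_ne fun h => hne (hinj hy hx h)

theorem exists_forall_eventually_lt_or_gt {M N : Type*} [LinearOrder M] [TopologicalSpace M]
    [OrderTopology M] [DenselyOrdered M] [NoMaxOrder M] [LinearOrder N] {f : M → N}
    {l : M → Filter M} {a b : M} (hab : a < b) (hinj : InjOn f (Ioo a b)) (hl : ∀ x, l x ≤ 𝓝[≠] x)
    (hgerm : ∀ x, (∀ᶠ y in l x, f x < f y) ∨ ∀ᶠ y in l x, ¬ f x < f y)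
    (hpc : PiecewiseConst fun x => ∀ᶠ y in l x, f x < f y) :
    ∃ d ∈ Ioc a b, (∀ x ∈ Ioo a d, ∀ᶠ y in l x, f x < f y) ∨
      ∀ x ∈ Ioo a d, ∀ᶠ y in l x, f y < f x := by
  obtain ⟨d, had, hd⟩ := hpc.exists_eqOn_Ioo a
  have hsub : Ioo a (min d b) ⊆ Ioo a d := Ioo_subset_Ioo_right (min_le_left _ _)
  refine ⟨min d b, ⟨lt_min had hab, min_le_right _ _⟩, ?_⟩
  obtain ⟨c, hc⟩ := exists_between (lt_min had hab)
  by_cases hlt : ∀ᶠ y in l c, f c < f y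
  · exact .inl fun x hx => hd c (hsub hc) x (hsub hx) ▸ hlt
  · refine .inr fun x hx => ?_
    have hx' : x ∈ Ioo a b := ⟨hx.1, hx.2.trans_le (min_le_right _ _)⟩
    exact eventually_gt_of_not_lt_of_injOn hinj hx' (hl x) <|
      (hgerm x).resolve_left (hd c (hsub hc) x (hsub hx) ▸ hlt)

theorem exists_not_lt_of_strictLocalMin {M N : Type*} [LinearOrder M] [TopologicalSpace M]
    [OrderTopology M] [DenselyOrdered M] [NoMinOrder M] [LinearOrder N] {f : M → N} {a b : M}
    (hab : a < b) (hmin : ∀ x ∈ Ioo a b, ∀ᶠ y in 𝓝[≠] x, f x < f y) :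
    ∃ x ∈ Ioo a b, ∃ y ∈ Ioo x b, ¬ f x < f y := by
  by_contra! hlt
  obtain ⟨x, hx⟩ := exists_between hab
  obtain ⟨y, hxy, hy⟩ := (((hmin x hx).filter_mono (nhdsLT_le_nhdsNE x)).and
    (Ioo_mem_nhdsLT hx.1)).exists
  exact hxy.asymm (hlt y ⟨hy.1, hy.2.trans hx.2⟩ x ⟨hy.2, hx.2⟩)

variable {L : FirstOrder.Language} {M N : Type*} [L.Structure M] [LinearOrder M] [OMinimalOrder L M]
  [TopologicalSpace M] [OrderTopology M] [DenselyOrdered M] [NoMinOrder M]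

attribute [local instance] dualStructure

include L in
theorem eventually_exists_not_lt_of_strictLocalMin [LinearOrder N] {f : M → N}
    [IsDefinablePred L M fun z : M × M => f z.1 < f z.2] {a b : M} (hab : a < b)
    (hmin : ∀ x ∈ Ioo a b, ∀ᶠ y in 𝓝[≠] x, f x < f y) :
    ∀ᶠ x in 𝓝[<] b, ∃ y ∈ Ioo x b, ¬ f x < f y := by
  have hpc : PiecewiseConst fun x => ∀ y, x < y ∧ y < b → f x < f y :=
    IsDefinablePred.piecewiseConst L _
  rcases hpc.eventually_or_eventually_not_nhdsLT b with h | h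
  · obtain ⟨w, hwb, hw⟩ := eventually_nhdsLT_iff.1 h
    obtain ⟨x, hx, y, hy, hxy⟩ := exists_not_lt_of_strictLocalMin (max_lt hwb hab) fun x hx =>
      hmin x ⟨(le_max_right _ _).trans_lt hx.1, hx.2⟩
    exact absurd (hw x ((le_max_left _ _).trans_lt hx.1) hx.2 y hy) hxy
  · simpa only [not_forall, exists_prop, mem_Ioo] using h

variable [NoMaxOrder M]

variable (L) in
theorem exists_last_exit {P : M → Prop} [IsDefinablePred L M P] {a b : M}
    (ha : ∃ x ∈ Ioo a b, ¬ P x) (hb : ∀ᶠ x in 𝓝[<] b, P x) :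
    ∃ z ∈ Ioo a b, (∀ x ∈ Ioo z b, P x) ∧ (P z → ∀ᶠ x in 𝓝[<] z, ¬ P x) := by
  let s : Set M := {x | (a < x ∧ x < b) ∧ ¬ P x}
  have : IsDefinablePred L M (· ∈ s) :=
    inferInstanceAs (IsDefinablePred L M fun x => (a < x ∧ x < b) ∧ ¬ P x)
  obtain ⟨x, hx, hPx⟩ := ha
  obtain ⟨z, hz⟩ : ∃ z, IsLUB s z := exists_isLUB L ⟨x, hx, hPx⟩ ⟨b, fun y hy => hy.1.2.le⟩
  obtain ⟨w, hwb, hw⟩ := eventually_nhdsLT_iff.1 hb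
  have haz : a < z := hx.1.trans_le (hz.1 ⟨hx, hPx⟩)
  have hzw : z ≤ w := hz.2 fun y hy => not_lt.1 fun hwy => hy.2 (hw y hwy hy.1.2)
  refine ⟨z, ⟨haz, hzw.trans_lt hwb⟩, fun y hy => ?_, fun hPz => ?_⟩
  · by_contra hPy
    exact hy.1.not_ge (hz.1 ⟨⟨haz.trans hy.1, hy.2⟩, hPy⟩)
  · refine ((IsDefinablePred.piecewiseConst L P).eventually_or_eventually_not_nhdsLT z).resolve_left
      fun hP => ?_
    obtain ⟨u, huz, hu⟩ := eventually_nhdsLT_iff.1 hP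
    obtain ⟨y, hys, huy⟩ := (lt_isLUB_iff hz).1 huz
    obtain hyz | rfl := (hz.1 hys).lt_or_eq
    · exact hys.2 (hu y huy hyz)
    · exact hys.2 hPz

variable (L) in
theorem exists_first_exit {P : M → Prop} [h : IsDefinablePred L M P] {a b : M}
    (hb : ∃ x ∈ Ioo a b, ¬ P x) (ha : ∀ᶠ x in 𝓝[>] a, P x) :
    ∃ z ∈ Ioo a b, (∀ x ∈ Ioo a z, P x) ∧ (P z → ∀ᶠ x in 𝓝[>] z, ¬ P x) := by
  have : IsDefinablePred L Mᵒᵈ (fun x => P (OrderDual.ofDual x)) := h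
  obtain ⟨x, hx, hPx⟩ := hb
  obtain ⟨z, hz, hPz, hexit⟩ := exists_last_exit L (M := Mᵒᵈ) (P := fun x => P (OrderDual.ofDual x))
    (a := OrderDual.toDual b) (b := OrderDual.toDual a) ⟨x, hx.symm, hPx⟩ ha
  exact ⟨z, hz.symm, fun x hx => hPz x hx.symm, hexit⟩

variable [LinearOrder N] {f : M → N}

/-- Some value `f c` separates the larger values of `f` just before `z` from the values just
after `z`. -/
def IsDropAt (f : M → N) (z : M) : Prop :=
  ∃ c, (∀ᶠ y in 𝓝[<] z, f c < f y) ∧ ∀ᶠ y in 𝓝[>] z, ¬ f c < f y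

variable [hf : IsDefinablePred L M fun z : M × M => f z.1 < f z.2]

include hf in
theorem exists_isDropAt_of_strictLocalMin {a b : M} (hab : a < b)
    (hmin : ∀ x ∈ Ioo a b, ∀ᶠ y in 𝓝[≠] x, f x < f y) : ∃ z ∈ Ioo a b, IsDropAt f z := by
  obtain ⟨w, hwb, hw⟩ :=
    eventually_nhdsLT_iff.1 (eventually_exists_not_lt_of_strictLocalMin (L := L) hab hmin)
  obtain ⟨x, hwx, hxb⟩ := exists_between (max_lt hwb hab)
  obtain ⟨hwx, hax⟩ := max_lt_iff.1 hwx
  have after : ∀ z ∈ Ioo x b, ∀ᶠ y in 𝓝[>] z, y ∈ Ioo z b ∧ f z < f y := fun z hz =>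
    (eventually_mem_set.2 (Ioo_mem_nhdsGT hz.2)).and <|
      (hmin z ⟨hax.trans hz.1, hz.2⟩).filter_mono (nhdsGT_le_nhdsNE z)
  have : IsDefinablePred L M fun y => f x < f y := hf.comp (f := Prod.mk x) inferInstance
  rcases (IsDefinablePred.piecewiseConst L fun y => f x < f y).eventually_or_eventually_not_nhdsLT b
    with hlt | hle
  · obtain ⟨z, hz, hzb, hexit⟩ := exists_last_exit L (hw x hwx hxb) hlt
    obtain ⟨y, hy, hzy⟩ := hw z (hwx.trans hz.1) hz.2
    have hxz : f x < f z := (hzb y hy).trans_le (not_lt.1 hzy)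
    have before := (hmin z ⟨hax.trans hz.1, hz.2⟩).filter_mono (nhdsLT_le_nhdsNE z)
    obtain ⟨t, hxt, hzt⟩ := ((hexit hxz).and before).exists
    exact absurd (hxz.trans hzt) hxt
  · obtain ⟨t, hxt, ht⟩ := (((hmin x ⟨hax, hxb⟩).filter_mono (nhdsGT_le_nhdsNE x)).and
      (Ioo_mem_nhdsGT hxb)).exists
    obtain ⟨z, hz, hzb, hexit⟩ := exists_last_exit L (P := fun y => ¬ f x < f y)
      ⟨t, ht, not_not.2 hxt⟩ hle
    obtain ⟨y, hy, hzy⟩ := (after z hz).exists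
    refine ⟨z, ⟨hax.trans hz.1, hz.2⟩, x, ?_, ?_⟩
    · exact (hexit fun hxz => hzb y hy (hxz.trans hzy)).mono fun _ => not_not.1
    · exact (after z hz).mono fun y hy => hzb y hy.1

include hf in
theorem not_forall_strictLocalMin {a b : M} (hab : a < b) :
    ¬ ∀ x ∈ Ioo a b, ∀ᶠ y in 𝓝[≠] x, f x < f y := by
  intro hmin
  have : IsDefinablePred L M fun w : (M × M) × M => f w.1.2 < f w.2 :=
    hf.comp (f := fun w : (M × M) × M => (w.1.2, w.2)) inferInstance
  have hdrop : PiecewiseConst (IsDropAt f) := IsDefinablePred.piecewiseConst L fun z =>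
    ∃ c, (∀ᶠ y in 𝓝[<] z, f c < f y) ∧ ∀ᶠ y in 𝓝[>] z, ¬ f c < f y
  obtain ⟨d, had, hd⟩ := hdrop.exists_eqOn_Ioo a
  have hab' : a < min d b := lt_min had hab
  replace hmin : ∀ x ∈ Ioo a (min d b), ∀ᶠ y in 𝓝[≠] x, f x < f y :=
    fun x hx => hmin x ⟨hx.1, hx.2.trans_le (min_le_right _ _)⟩
  replace hd : ∀ x ∈ Ioo a (min d b), ∀ y ∈ Ioo a (min d b), IsDropAt f x = IsDropAt f y :=
    fun x hx y hy => hd x (Ioo_subset_Ioo_right (min_le_left _ _) hx) y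
      (Ioo_subset_Ioo_right (min_le_left _ _) hy)
  obtain ⟨z, hz, hz_drop⟩ := exists_isDropAt_of_strictLocalMin (L := L) hab' hmin
  have : IsDefinablePred L Mᵒᵈ fun z : Mᵒᵈ × Mᵒᵈ =>
    f (OrderDual.ofDual z.1) < f (OrderDual.ofDual z.2) := hf
  obtain ⟨w, hw, c, hc_after, hc_before⟩ : ∃ w ∈ Ioo a (min d b), ∃ c,
      (∀ᶠ y in 𝓝[>] w, f c < f y) ∧ ∀ᶠ y in 𝓝[<] w, ¬ f c < f y := by
    obtain ⟨w, hw, h⟩ := exists_isDropAt_of_strictLocalMin (L := L) (M := Mᵒᵈ)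
      (f := fun x => f (OrderDual.ofDual x)) (a := OrderDual.toDual (min d b))
      (b := OrderDual.toDual a) hab' fun x hx => hmin x hx.symm
    exact ⟨w, hw.symm, h⟩
  obtain ⟨c', hc'_before, hc'_after⟩ := hd z hz w hw ▸ hz_drop
  obtain ⟨y, hcy, hc'y⟩ := (hc'_before.and hc_before).exists
  obtain ⟨t, hct, hc't⟩ := (hc'_after.and hc_after).exists
  exact hct (hc't.trans_le' ((not_lt.1 hc'y).trans' hcy.le))

include hf in
theorem strictMonoOn_Ioo_of_locally_lt {a b : M}
    (hright : ∀ x ∈ Ioo a b, ∀ᶠ y in 𝓝[>] x, f x < f y)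
    (hleft : ∀ x ∈ Ioo a b, ∀ᶠ y in 𝓝[<] x, f y < f x) : StrictMonoOn f (Ioo a b) := by
  intro x hx y hy hxy
  by_contra hfxy
  have : IsDefinablePred L M fun y => f x < f y := hf.comp (f := Prod.mk x) inferInstance
  obtain ⟨z, hz, hxz, hexit⟩ := exists_first_exit L ⟨y, ⟨hxy, hy.2⟩, hfxy⟩ (hright x hx)
  have hz' : z ∈ Ioo a b := ⟨hx.1.trans hz.1, hz.2⟩
  obtain ⟨t, htz, ht⟩ := ((hleft z hz').and (Ioo_mem_nhdsLT hz.1)).exists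
  have hfxz : f x < f z := (hxz t ht).trans htz
  obtain ⟨s, hxs, hzs⟩ := ((hexit hfxz).and (hright z hz')).exists
  exact hxs (hfxz.trans hzs)

include hf in
theorem exists_strictMonoOn_or_strictAntiOn_Ioo {a b : M} (hab : a < b) (hinj : InjOn f (Ioo a b)) :
    ∃ d ∈ Ioc a b, StrictMonoOn f (Ioo a d) ∨ StrictAntiOn f (Ioo a d) := by
  have hdual : IsDefinablePred L M fun z : M × M =>
      OrderDual.toDual (f z.1) < OrderDual.toDual (f z.2) :=
    hf.comp (f := fun z : M × M => (z.2, z.1)) inferInstance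
  have hgerm : ∀ x, PiecewiseConst fun y => f x < f y := fun x =>
    have : IsDefinablePred L M fun y => f x < f y := hf.comp (f := Prod.mk x) inferInstance
    IsDefinablePred.piecewiseConst L _
  obtain ⟨c, hc, hright⟩ := exists_forall_eventually_lt_or_gt (l := fun x => 𝓝[>] x) hab hinj
    nhdsGT_le_nhdsNE (fun x => (hgerm x).eventually_or_eventually_not_nhdsGT x)
    (IsDefinablePred.piecewiseConst L _)
  obtain ⟨d, hd, hleft⟩ := exists_forall_eventually_lt_or_gt (l := fun x => 𝓝[<] x) hc.1
    (hinj.mono (Ioo_subset_Ioo_right hc.2)) nhdsLT_le_nhdsNE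
    (fun x => (hgerm x).eventually_or_eventually_not_nhdsLT x) (IsDefinablePred.piecewiseConst L _)
  have hdc : Ioo a d ⊆ Ioo a c := Ioo_subset_Ioo_right hd.2
  refine ⟨d, Ioc_subset_Ioc_right hc.2 hd, ?_⟩
  rcases hright with hright | hright <;> rcases hleft with hleft | hleft
  · refine absurd (fun x hx => ?_) (not_forall_strictLocalMin (L := L) (f := f) hd.1)
    rw [punctured_nhds_eq_nhdsWithin_sup_nhdsWithin]
    exact eventually_sup.2 ⟨hleft x hx, hright x (hdc hx)⟩
  · exact .inl (strictMonoOn_Ioo_of_locally_lt (L := L) (fun x hx => hright x (hdc hx)) hleft)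
  · exact .inr <| strictMonoOn_Ioo_of_locally_lt (L := L) (f := fun x => OrderDual.toDual (f x))
      (fun x hx => hright x (hdc hx)) hleft
  · refine absurd (fun x hx => ?_)
      (not_forall_strictLocalMin (L := L) (f := fun x => OrderDual.toDual (f x)) hd.1)
    rw [punctured_nhds_eq_nhdsWithin_sup_nhdsWithin]
    exact eventually_sup.2 ⟨hleft x hx, hright x (hdc hx)⟩

end Monotonicity

section GenericContinuity

variable (L : FirstOrder.Language) {M : Type*} [L.Structure M] [LinearOrder M] [OMinimalOrder L M]
  [TopologicalSpace M] [OrderTopology M] [DenselyOrdered M] [NoMinOrder M] [NoMaxOrder M]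
  {f : M → M} [IsDefinableMap L M f]

include L

theorem exists_injOn_Ioo_of_finite_fibers {a b : M} (hab : a < b)
    (hfin : ∀ y, (Ioo a b ∩ f ⁻¹' {y}).Finite) :
    ∃ c d, c < d ∧ Ioo c d ⊆ Ioo a b ∧ InjOn f (Ioo c d) := by
  let leastInFiber : Set M := {x | (a < x ∧ x < b) ∧ ∀ x', a < x' → x' < x → f x' ≠ f x}
  have hsub : leastInFiber ⊆ Ioo a b := fun x hx => hx.1
  have hinj : InjOn f leastInFiber := by
    intro x hx y hy hxy
    by_contra hne
    rcases lt_or_gt_of_ne hne with h | h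
    · exact hy.2 x hx.1.1 h hxy
    · exact hx.2 y hy.1.1 h hxy.symm
  have himage : f '' Ioo a b ⊆ f '' leastInFiber := by
    rintro _ ⟨x, hx, rfl⟩
    obtain ⟨m, ⟨hm, hmx⟩, hmin⟩ := (hfin (f x)).exists_minimal ⟨x, hx, rfl⟩
    refine ⟨m, ⟨hm, fun x' hax' hx'm hx' => ?_⟩, hmx⟩
    exact hx'm.not_ge (hmin ⟨⟨hax', hx'm.trans hm.2⟩, hx'.trans hmx⟩ hx'm.le)
  have hinf : leastInFiber.Infinite := fun h =>
    Ioo_infinite hab <| .of_finite_fibers f ((h.image f).subset himage) fun y _ => hfin y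
  obtain ⟨z, hz⟩ := (IsDefinablePred.piecewiseConst L fun x => (a < x ∧ x < b) ∧
    ∀ x', a < x' → x' < x → f x' ≠ f x).exists_eventually_of_infinite hinf
  obtain ⟨c, d, hcz, hzd, hcd⟩ := eventually_nhds_iff.1 hz
  have hle : Ioo c d ⊆ leastInFiber := fun x hx => hcd x hx.1 hx.2
  exact ⟨c, d, hcz.trans hzd, hle.trans hsub, hinj.mono hle⟩

theorem exists_continuousAt_of_injOn_Ioo {a b : M} (hab : a < b) (hinj : InjOn f (Ioo a b)) :
    ∃ x ∈ Ioo a b, ContinuousAt f x := by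
  obtain ⟨d, hd, hmono⟩ := exists_strictMonoOn_or_strictAntiOn_Ioo (L := L) hab hinj
  have hsub : Ioo a d ⊆ Ioo a b := Ioo_subset_Ioo_right hd.2
  have hinf : (f '' Ioo a d).Infinite := (Ioo_infinite hd.1).image (hinj.mono hsub)
  have himage : PiecewiseConst (· ∈ f '' Ioo a d) :=
    IsDefinablePred.piecewiseConst L fun y => ∃ x, (a < x ∧ x < d) ∧ f x = y
  obtain ⟨y, hy⟩ := himage.exists_eventually_of_infinite hinf
  obtain ⟨x, hx, rfl⟩ := hy.self_of_nhds
  have hx_nhds : Ioo a d ∈ 𝓝 x := Ioo_mem_nhds hx.1 hx.2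
  refine ⟨x, hsub hx, ?_⟩
  rcases hmono with hmono | hanti
  · exact hmono.continuousAt_of_image_mem_nhds hx_nhds hy
  · exact StrictMonoOn.continuousAt_of_image_mem_nhds (β := Mᵒᵈ)
      (f := fun x => OrderDual.toDual (f x)) (fun _ hx _ hy => hanti hx hy) hx_nhds hy

theorem eventually_continuousAt : ∀ᶠ x in cofinite, ContinuousAt f x := by
  refine (IsDefinablePred.piecewiseConst L _).eventually_cofinite_of_dense fun a b hab => ?_
  by_cases hfin : ∀ y, (Ioo a b ∩ f ⁻¹' {y}).Finite
  · obtain ⟨c, d, hcd, hsub, hinj⟩ := exists_injOn_Ioo_of_finite_fibers L hab hfin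
    obtain ⟨x, hx, hcont⟩ := exists_continuousAt_of_injOn_Ioo L hcd hinj
    exact ⟨x, hsub hx, hcont⟩
  · push Not at hfin
    obtain ⟨y, hy⟩ := hfin
    obtain ⟨x, hx⟩ := (IsDefinablePred.piecewiseConst L
      fun x => (a < x ∧ x < b) ∧ f x = y).exists_eventually_of_infinite hy
    have hconst : ∀ᶠ t in 𝓝 x, y = f t := hx.mono fun t ht => ht.2.symm
    exact ⟨x, hx.self_of_nhds.1, continuousAt_const.congr hconst⟩

end GenericContinuity

section PlaneFamilies

variable (L : FirstOrder.Language) {M : Type u} [L.Structure M] [LinearOrder M] [OMinimalOrder L M]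
  [TopologicalSpace M] [OrderTopology M] [DenselyOrdered M] [NoMinOrder M] [NoMaxOrder M]

section

include L

theorem eventually_forall_forall_lt {Z : M → Set M} [IsDefinableFamily L M Z]
    (hfin : ∀ x, (Z x).Finite) :
    ∀ᶠ a in cofinite, ∀ l, (∀ z ∈ Z a, l < z) → ∃ c > l, ∀ᶠ x in 𝓝 a, ∀ z ∈ Z x, c < z := by
  obtain hM | hM := isEmpty_or_nonempty M
  · exact .of_forall hM.elim
  let least : M → M := fun x => Classical.epsilon (IsLeast (Z x))
  have : IsDefinableMap L M least := .epsilon fun _ _ _ => IsLeast.unique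
  have hleast : ∀ x, (Z x).Nonempty → IsLeast (Z x) (least x) := fun x hx =>
    Classical.epsilon_spec ((hfin x).isCompact.exists_isLeast hx)
  filter_upwards [eventually_continuousAt L (f := least),
    (IsDefinablePred.piecewiseConst L fun x => (Z x).Nonempty).eventually_isLocallyConstAt]
    with a hcont hnonempty l hl
  by_cases hne : (Z a).Nonempty
  · obtain ⟨c, hlc, hca⟩ := exists_between (hl _ (hleast a hne).1)
    refine ⟨c, hlc, ?_⟩
    filter_upwards [hcont.eventually_const_lt hca] with x hx z hz
    exact hx.trans_le ((hleast x ⟨z, hz⟩).2 hz)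
  · obtain ⟨c, hlc⟩ := exists_gt l
    refine ⟨c, hlc, ?_⟩
    filter_upwards [hnonempty] with x hx z hz
    exact absurd (hx ▸ ⟨z, hz⟩) hne

attribute [local instance] dualStructure in
theorem eventually_forall_forall_gt {Z : M → Set M} [hZ : IsDefinableFamily L M Z]
    (hfin : ∀ x, (Z x).Finite) :
    ∀ᶠ a in cofinite, ∀ l, (∀ z ∈ Z a, z < l) → ∃ c < l, ∀ᶠ x in 𝓝 a, ∀ z ∈ Z x, z < c := by
  have : IsDefinableFamily L Mᵒᵈ (fun x : Mᵒᵈ => OrderDual.ofDual ⁻¹' Z (OrderDual.ofDual x)) :=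
    ⟨hZ.isDefinablePred_mem⟩
  exact eventually_forall_forall_lt L (M := Mᵒᵈ)
    (Z := fun x => OrderDual.ofDual ⁻¹' Z (OrderDual.ofDual x)) hfin

end

section IsRegularAt

variable {M : Type*} [LinearOrder M] [TopologicalSpace M]

/-- On some box around `(a, b)`, the family `Y` is empty or the graph of a function continuous at
`a`. Both cases are expressed at once through the subintervals `Ioc e e'` that the fibres meet. -/
def IsRegularAt (Y : M → Set M) (a b : M) : Prop :=
  ∃ c d, b ∈ Ioo c d ∧ (∀ᶠ x in 𝓝 a, (Y x ∩ Ioo c d).Subsingleton) ∧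
    ∀ e ∈ Ioo c d, e ≠ b → ∀ e' ∈ Ioo c d, e' ≠ b →
      IsLocallyConstAt (fun x => (Y x ∩ Ioc e e').Nonempty) a

/-- Near `a` the family `Y` is bounded, and it is regular at every point above `a`. -/
def IsRegularOver (Y : M → Set M) (a : M) : Prop :=
  (∃ c, ∀ᶠ x in 𝓝 a, ∀ z ∈ Y x, c < z) ∧ (∃ c, ∀ᶠ x in 𝓝 a, ∀ z ∈ Y x, z < c) ∧
    ∀ b, IsRegularAt Y a b

variable [OrderTopology M]

theorem IsRegularAt.eventually {Y : M → Set M} {a b : M} (h : IsRegularAt Y a b) :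
    ∀ᶠ b' in 𝓝 b, IsRegularAt Y a b' := by
  obtain ⟨c, d, hb, hsub, hlc⟩ := h
  have shrink : ∀ c' d', Ioo c' d' ⊆ Ioo c d → b ∉ Ioo c' d' → ∀ b' ∈ Ioo c' d',
      IsRegularAt Y a b' := fun c' d' hsubset hbnot b' hb' =>
    ⟨c', d', hb', hsub.mono fun x hx => hx.anti (inter_subset_inter_right _ hsubset),
      fun e he _ e' he' _ => hlc e (hsubset he) (ne_of_mem_of_not_mem he hbnot)
        e' (hsubset he') (ne_of_mem_of_not_mem he' hbnot)⟩
  filter_upwards [Ioo_mem_nhds hb.1 hb.2] with b' hb'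
  rcases lt_trichotomy b' b with hlt | rfl | hgt
  · exact shrink c b (Ioo_subset_Ioo_right hb.2.le) right_notMem_Ioo b' ⟨hb'.1, hlt⟩
  · exact ⟨c, d, hb, hsub, hlc⟩
  · exact shrink b d (Ioo_subset_Ioo_left hb.1.le) left_notMem_Ioo b' ⟨hgt, hb'.2⟩

theorem IsRegularAt.of_eventually_eq_singleton {Y : M → Set M} {β : M → M} {a c d : M}
    (ha : β a ∈ Ioo c d) (hβ : ContinuousAt β a) (hmem : IsLocallyConstAt (fun x => β x ∈ Y x) a)
    (heq : ∀ᶠ x in 𝓝 a, ∀ z ∈ Y x, z ∈ Ioo c d → z = β x) : IsRegularAt Y a (β a) := by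
  refine ⟨c, d, ha, ?_, fun e he hea e' he' hea' => ?_⟩
  · filter_upwards [heq] with x hx z hz z' hz'
    rw [hx z hz.1 hz.2, hx z' hz'.1 hz'.2]
  have side : ∀ e, e ≠ β a → ∀ᶠ x in 𝓝 a, (e < β x ↔ e < β a) := fun e hea => by
    rcases hea.lt_or_gt with h | h
    · filter_upwards [hβ.eventually_const_lt h] with x hx using iff_of_true hx h
    · filter_upwards [hβ.eventually_lt_const h] with x hx using iff_of_false hx.not_gt h.not_gt
  have nonempty_iff : ∀ᶠ x in 𝓝 a,
      ((Y x ∩ Ioc e e').Nonempty ↔ β x ∈ Y x ∧ e < β x ∧ ¬ e' < β x) := by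
    filter_upwards [heq] with x hx
    refine ⟨?_, fun h => ⟨β x, h.1, h.2.1, not_lt.1 h.2.2⟩⟩
    rintro ⟨z, hz, hze⟩
    obtain rfl := hx z hz ⟨he.1.trans hze.1, hze.2.trans_lt he'.2⟩
    exact ⟨hz, hze.1, hze.2.not_gt⟩
  filter_upwards [nonempty_iff, hmem, side e hea, side e' hea'] with x hx hxY hxe hxe'
  rw [hx, nonempty_iff.self_of_nhds, hxY, hxe, hxe']

end IsRegularAt

section Definability

variable {L} {Γ : Type*} [FinPower M Γ] {Y : Γ → M → Set M}
  [hY : IsDefinableFamily L M fun w : Γ × M => Y w.1 w.2] {f h : Γ → M} [IsDefinableMap L M f]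

set_option synthInstance.maxSize 512 in
instance IsDefinablePred.isRegularAt [IsDefinableMap L M h] :
    IsDefinablePred L M (fun g => IsRegularAt (Y g) (f g) (h g)) := by
  have : IsDefinableFamily L M fun w : ((Γ × M) × M) × M => Y w.1.1.1 w.2 :=
    hY.comp (f := fun w : ((Γ × M) × M) × M => (w.1.1.1, w.2)) inferInstance
  have : IsDefinableFamily L M fun w : ((((Γ × M) × M) × M) × M) × M => Y w.1.1.1.1.1 w.2 :=
    hY.comp (f := fun w : ((((Γ × M) × M) × M) × M) × M => (w.1.1.1.1.1, w.2)) inferInstance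
  exact inferInstanceAs (IsDefinablePred L M fun g => ∃ c d, h g ∈ Ioo c d ∧
    (∀ᶠ x in 𝓝 (f g), (Y g x ∩ Ioo c d).Subsingleton) ∧
      ∀ e, e ∈ Ioo c d → ¬ e = h g → ∀ e', e' ∈ Ioo c d → ¬ e' = h g →
        IsLocallyConstAt (fun x => (Y g x ∩ Ioc e e').Nonempty) (f g))

instance IsDefinablePred.isRegularOver :
    IsDefinablePred L M (fun g => IsRegularOver (Y g) (f g)) := by
  have : IsDefinableFamily L M fun w : (((Γ × M) × M) × M) => Y w.1.1.1 w.1.2 :=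
    hY.comp (f := fun w : (((Γ × M) × M) × M) => (w.1.1.1, w.1.2)) inferInstance
  have : IsDefinableFamily L M fun w : (Γ × M) × M => Y w.1.1 w.2 :=
    hY.comp (f := fun w : (Γ × M) × M => (w.1.1, w.2)) inferInstance
  exact inferInstanceAs (IsDefinablePred L M fun g =>
    (∃ c, ∀ᶠ x in 𝓝 (f g), ∀ z, z ∈ Y g x → c < z) ∧
      (∃ c, ∀ᶠ x in 𝓝 (f g), ∀ z, z ∈ Y g x → z < c) ∧ ∀ b, IsRegularAt (Y g) (f g) b)

end Definability

variable {Y : M → Set M} [IsDefinableFamily L M Y] (hfin : ∀ x, (Y x).Finite)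

include L hfin

theorem eventually_isRegularAt_of_isDefinableMap (β : M → M) [IsDefinableMap L M β] :
    ∀ᶠ a in cofinite, IsRegularAt Y a (β a) := by
  filter_upwards [eventually_continuousAt L (f := β),
    (IsDefinablePred.piecewiseConst L fun x => β x ∈ Y x).eventually_isLocallyConstAt,
    eventually_forall_forall_lt L (Z := fun x => Y x ∩ Ioi (β x)) fun x => (hfin x).inter_of_left _,
    eventually_forall_forall_gt L (Z := fun x => Y x ∩ Iio (β x)) fun x => (hfin x).inter_of_left _]
    with a hcont hmem habove hbelow
  obtain ⟨d, hd, habove⟩ := habove (β a) fun z hz => hz.2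
  obtain ⟨c, hc, hbelow⟩ := hbelow (β a) fun z hz => hz.2
  refine .of_eventually_eq_singleton ⟨hc, hd⟩ hcont hmem ?_
  filter_upwards [habove, hbelow] with x hxa hxb z hzY hz
  exact le_antisymm (not_lt.1 fun h => hz.2.not_gt (hxa z ⟨hzY, h⟩))
    (not_lt.1 fun h => hz.1.not_gt (hxb z ⟨hzY, h⟩))

theorem eventually_exists_forall_lt :
    ∀ᶠ a in cofinite, ∃ c, ∀ᶠ x in 𝓝 a, ∀ z ∈ Y x, c < z := by
  filter_upwards [eventually_forall_forall_lt L hfin] with a ha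
  have : Nonempty M := ⟨a⟩
  obtain ⟨l, hl⟩ := (hfin a).bddBelow
  obtain ⟨l', hl'⟩ := exists_lt l
  obtain ⟨c, -, hc⟩ := ha l' fun z hz => hl'.trans_le (hl hz)
  exact ⟨c, hc⟩

theorem eventually_exists_forall_gt :
    ∀ᶠ a in cofinite, ∃ c, ∀ᶠ x in 𝓝 a, ∀ z ∈ Y x, z < c := by
  filter_upwards [eventually_forall_forall_gt L hfin] with a ha
  have : Nonempty M := ⟨a⟩
  obtain ⟨l, hl⟩ := (hfin a).bddAbove
  obtain ⟨l', hl'⟩ := exists_gt l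
  obtain ⟨c, -, hc⟩ := ha l' fun z hz => (hl hz).trans_lt hl'
  exact ⟨c, hc⟩

omit hfin in
theorem exists_isLeast_setOf_not_isRegularAt {a c : M} (hc : ∀ᶠ x in 𝓝 a, ∀ z ∈ Y x, c < z)
    (hne : ∃ b, ¬ IsRegularAt Y a b) : ∃ b, IsLeast {b | ¬ IsRegularAt Y a b} b := by
  have : IsDefinablePred L M (· ∈ {b | ¬ IsRegularAt Y a b}) := .not
    (hP := .isRegularAt (Y := fun _ => Y) (f := fun _ => a) (h := fun b => b))
  have hclosed : IsClosed {b | ¬ IsRegularAt Y a b} :=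
    ⟨isOpen_iff_eventually.2 fun b hb => (not_not.1 hb).eventually.mono fun _ => not_not.2⟩
  have hbdd : c ∈ lowerBounds {b | ¬ IsRegularAt Y a b} := by
    refine fun b hb => not_lt.1 fun hbc => hb ?_
    obtain ⟨e, he⟩ := exists_lt b
    have hempty : ∀ᶠ x in 𝓝 a, Y x ∩ Ioo e c = ∅ := hc.mono fun x hx =>
      eq_empty_of_forall_notMem fun z hz => hz.2.2.not_gt (hx z hz.1)
    refine ⟨e, c, ⟨he, hbc⟩, hempty.mono fun x hx => hx ▸ subsingleton_empty, ?_⟩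
    intro u hu _ v hv _
    have hempty' : ∀ᶠ x in 𝓝 a, ¬ (Y x ∩ Ioc u v).Nonempty := hempty.mono fun x hx ⟨z, hzY, hz⟩ =>
      hx.le ⟨hzY, hu.1.trans hz.1, hz.2.trans_lt hv.2⟩
    filter_upwards [hempty'] with x hx
    exact propext (iff_of_false hx hempty'.self_of_nhds)
  obtain ⟨z, hz⟩ := exists_isGLB L (s := {b | ¬ IsRegularAt Y a b}) hne ⟨c, hbdd⟩
  exact ⟨z, hz.mem_of_isClosed hne hclosed, hz.1⟩

theorem eventually_isRegularOver : ∀ᶠ a in cofinite, IsRegularOver Y a := by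
  obtain hM | hM := isEmpty_or_nonempty M
  · exact .of_forall hM.elim
  let leastSingular : M → M := fun a => Classical.epsilon (IsLeast {b | ¬ IsRegularAt Y a b})
  have : IsDefinableMap L M leastSingular := .epsilon fun _ _ _ => IsLeast.unique
  filter_upwards [eventually_exists_forall_lt L hfin, eventually_exists_forall_gt L hfin,
    eventually_isRegularAt_of_isDefinableMap L hfin leastSingular] with a hlower hupper hreg
  refine ⟨hlower, hupper, ?_⟩
  by_contra! hne
  obtain ⟨c, hc⟩ := hlower
  exact (Classical.epsilon_spec (exists_isLeast_setOf_not_isRegularAt L hc hne)).1 hreg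

end PlaneFamilies

section PlaneUniformFiniteness

variable (L : FirstOrder.Language) {M : Type u} [L.Structure M] [LinearOrder M] [OMinimalOrder L M]
  [TopologicalSpace M] [OrderTopology M] [NoMinOrder M] [NoMaxOrder M]
  {Y : M → Set M} [IsDefinableFamily L M Y] (hfin : ∀ x, (Y x).Finite)

theorem IsRegularAt.exists_isLocallyConstAt_ncard_iff {M : Type*} [LinearOrder M]
    [TopologicalSpace M] {Y : M → Set M} (hfin : ∀ x, (Y x).Finite) {a b : M}
    (h : IsRegularAt Y a b) :
    ∃ c d, b ∈ Ioo c d ∧ ∀ e ∈ Ioo c d, e ≠ b → ∀ e' ∈ Ioo c d, e' ≠ b →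
      (IsLocallyConstAt (fun x => (Y x ∩ Iic e).ncard) a ↔
        IsLocallyConstAt (fun x => (Y x ∩ Iic e').ncard) a) := by
  obtain ⟨c, d, hb, hsub, hlc⟩ := h
  refine ⟨c, d, hb, fun e he heb e' he' heb' => ?_⟩
  wlog hle : e ≤ e' generalizing e e'
  · exact (this e' he' heb' e he heb (le_of_not_ge hle)).symm
  have hsplit : ∀ x, (Y x ∩ Iic e').ncard = (Y x ∩ Iic e).ncard + (Y x ∩ Ioc e e').ncard := by
    intro x
    rw [← Iic_union_Ioc_eq_Iic hle, inter_union_distrib_left]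
    exact ncard_union_eq ((Iic_disjoint_Ioc le_rfl).mono inter_subset_right inter_subset_right)
      ((hfin x).inter_of_left _) ((hfin x).inter_of_left _)
  have hIoc : ∀ᶠ x in 𝓝 a, (Y x ∩ Ioc e e').ncard = (Y a ∩ Ioc e e').ncard := by
    have hsub' : ∀ᶠ x in 𝓝 a, (Y x ∩ Ioc e e').Subsingleton := hsub.mono fun x hx =>
      hx.anti (inter_subset_inter_right _ fun z hz => ⟨he.1.trans hz.1, hz.2.trans_lt he'.2⟩)
    filter_upwards [hsub', hlc e he heb e' he' heb'] with x hx hne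
    by_cases ha : (Y a ∩ Ioc e e').Nonempty
    · obtain ⟨z, hz⟩ := hsub'.self_of_nhds.eq_empty_or_singleton.resolve_left ha.ne_empty
      obtain ⟨w, hw⟩ := hx.eq_empty_or_singleton.resolve_left (hne ▸ ha).ne_empty
      rw [hz, hw, ncard_singleton, ncard_singleton]
    · have hx : ¬ (Y x ∩ Ioc e e').Nonempty := hne ▸ ha
      rw [not_nonempty_iff_eq_empty.1 ha, not_nonempty_iff_eq_empty.1 hx]
  refine eventually_congr (hIoc.mono fun x hx => ?_)
  simp only [hsplit x, hsplit a, hx, Nat.add_right_cancel_iff]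

include hfin

theorem IsDefinablePred.isLocallyConstAt_ncard_inter_Iic (a : M) :
    IsDefinablePred L M fun e => IsLocallyConstAt (fun x => (Y x ∩ Iic e).ncard) a := by
  have hnearby : ∀ n, IsDefinablePred L M fun z : M × M => (Y z.2 ∩ Iic z.1).ncard = n :=
    ncard_eq fun z => (hfin z.2).inter_of_left _
  have hlevel : ∀ n, IsDefinablePred L M fun e =>
      (Y a ∩ Iic e).ncard = n ∧ ∀ᶠ x in 𝓝 a, (Y x ∩ Iic e).ncard = n := fun n =>
    have := hnearby n
    have : IsDefinablePred L M fun e => (Y a ∩ Iic e).ncard = n :=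
      (hnearby n).comp (f := fun e : M => (e, a)) inferInstance
    inferInstance
  refine congr (exists_mem_finset (Finset.range ((Y a).ncard + 1)) hlevel) fun e =>
    ⟨?_, fun h => ?_⟩
  · rintro ⟨n, -, rfl, hn⟩
    exact hn
  · exact ⟨_, Finset.mem_range_succ_iff.2 (ncard_le_ncard inter_subset_left (hfin a)), rfl, h⟩

variable [DenselyOrdered M]

include L

theorem isLocallyConstAt_ncard_inter_Iic_of_isRegularAt {a : M} (hreg : ∀ b, IsRegularAt Y a b)
    {b₀ b₁ : M} (h₀ : ∀ e < b₀, IsLocallyConstAt (fun x => (Y x ∩ Iic e).ncard) a) :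
    ∀ᶠ e in 𝓝[<] b₁, IsLocallyConstAt (fun x => (Y x ∩ Iic e).ncard) a := by
  set K : M → Prop := fun e => IsLocallyConstAt (fun x => (Y x ∩ Iic e).ncard) a
  have : IsDefinablePred L M K := .isLocallyConstAt_ncard_inter_Iic L hfin a
  have germ_const : ∀ b, IsLocallyConstAt (fun b => ∀ᶠ e in 𝓝[<] b, K e) b := by
    intro b
    obtain ⟨c, d, hb, hK⟩ := (hreg b).exists_isLocallyConstAt_ncard_iff hfin
    obtain ⟨e₀, he₀⟩ := exists_between hb.1
    have germ_iff : ∀ b' ∈ Ioo c d, (∀ᶠ e in 𝓝[<] b', K e) ↔ K e₀ := by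
      intro b' hb'
      have hne : ∀ᶠ e in 𝓝[<] b', e ≠ b := by
        rcases le_or_gt b' b with h | h
        · exact eventually_mem_nhdsWithin.mono fun e he => (he.trans_le h).ne
        · exact nhdsWithin_le_nhds ((eventually_gt_nhds h).mono fun e he => he.ne')
      rw [eventually_congr (q := fun _ => K e₀), eventually_const]
      filter_upwards [hne, nhdsWithin_le_nhds (Ioo_mem_nhds hb'.1 hb'.2)] with e heb he
      exact hK e he heb e₀ ⟨he₀.1, he₀.2.trans hb.2⟩ he₀.2.ne
    filter_upwards [Ioo_mem_nhds hb.1 hb.2] with b' hb'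
    exact propext ((germ_iff b' hb').trans (germ_iff b hb).symm)
  have hconst := (IsDefinablePred.piecewiseConst L fun b => ∀ᶠ e in 𝓝[<] b, K e)
    |>.eq_of_isLocallyConstAt (a := b₀) (b := b₁) fun z _ => germ_const z
  exact hconst ▸ eventually_mem_nhdsWithin.mono h₀

theorem IsRegularOver.isLocallyConstAt_ncard {a : M} (ha : IsRegularOver Y a) :
    IsLocallyConstAt (fun x => (Y x).ncard) a := by
  obtain ⟨⟨c, hc⟩, ⟨d, hd⟩, hreg⟩ := ha
  have below : ∀ e < c, IsLocallyConstAt (fun x => (Y x ∩ Iic e).ncard) a := by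
    intro e hec
    have hempty : ∀ᶠ x in 𝓝 a, Y x ∩ Iic e = ∅ := hc.mono fun x hx =>
      eq_empty_of_forall_notMem fun z hz => (hz.2.trans_lt hec).not_gt (hx z hz.1)
    exact hempty.mono fun x hx => by simp only [hx, hempty.self_of_nhds]
  obtain ⟨b, hdb⟩ := exists_gt d
  obtain ⟨e, hconst, hde, -⟩ := ((isLocallyConstAt_ncard_inter_Iic_of_isRegularAt L hfin hreg
    below).and (Ioo_mem_nhdsLT hdb)).exists
  have hfull : ∀ᶠ x in 𝓝 a, Y x ∩ Iic e = Y x := hd.mono fun x hx =>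
    inter_eq_left.2 fun z hz => ((hx z hz).trans hde).le
  filter_upwards [hconst, hfull] with x hx hxfull
  rwa [hxfull, hfull.self_of_nhds] at hx

theorem piecewiseConst_ncard : PiecewiseConst fun x => (Y x).ncard := by
  refine .of_fibers (fun n => ?_) <|
    (eventually_isRegularOver L hfin).mono fun a => IsRegularOver.isLocallyConstAt_ncard L hfin
  have := IsDefinablePred.ncard_eq (L := L) hfin n
  exact IsDefinablePred.piecewiseConst L _

theorem finite_setOf_infinite_setOf_mem : {q | {r | q ∈ Y r}.Infinite}.Finite := by
  let stable : M → Set M := fun r => {q | ∀ᶠ r' in 𝓝 r, q ∈ Y r'}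
  have : IsDefinableFamily L M stable := inferInstanceAs (IsDefinableFamily L M fun r =>
    {q | ∀ᶠ r' in 𝓝 r, q ∈ Y r'})
  have stable_finite : ∀ r, (stable r).Finite := fun r =>
    (hfin r).subset fun q hq => hq.self_of_nhds
  have level : ∀ s, PiecewiseConst fun r => stable r = s := by
    intro s
    by_cases hs : ∃ r₀, stable r₀ = s
    · obtain ⟨r₀, rfl⟩ := hs
      simpa only [Set.ext_iff] using
        IsDefinablePred.piecewiseConst L fun r => ∀ q, q ∈ stable r ↔ q ∈ stable r₀
    · simpa only [fun r => eq_false fun h => hs ⟨r, h⟩] using PiecewiseConst.const False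
  have lc : ∀ᶠ r in cofinite, IsLocallyConstAt stable r := by
    filter_upwards [(piecewiseConst_ncard L stable_finite).eventually_isLocallyConstAt] with r hr
    have hsub : ∀ᶠ r' in 𝓝 r, ∀ q ∈ stable r, q ∈ stable r' :=
      (eventually_all_finite (stable_finite r)).2 fun q hq => hq.eventually_nhds
    filter_upwards [hr, hsub] with r' hcard hsub
    exact (eq_of_subset_of_ncard_le hsub hcard.le (stable_finite r')).symm
  refine ((PiecewiseConst.of_fibers level lc).finite_range.biUnion (t := id)
    (forall_mem_range.2 stable_finite)).subset fun q hq => ?_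
  obtain ⟨r, hr⟩ := (IsDefinablePred.piecewiseConst L fun r => q ∈ Y r)
    |>.exists_eventually_of_infinite hq
  exact mem_biUnion (mem_range_self r) hr

theorem eventually_exists_mem_of_isOpen {V : M → Set M} (hV : ∀ q, IsOpen (V q)) :
    ∀ᶠ q in cofinite, (V q).Nonempty → ∃ r ∈ V q, q ∉ Y r := by
  filter_upwards [(finite_setOf_infinite_setOf_mem L hfin).compl_mem_cofinite] with q hq hne
  obtain ⟨r, hr⟩ := hne
  have hinf : (V q).Infinite := by
    obtain ⟨a, b, hab, hsub⟩ := mem_nhds_iff_exists_Ioo_subset.1 ((hV q).mem_nhds hr)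
    exact (Ioo_infinite (hab.1.trans hab.2)).mono hsub
  exact hinf.exists_notMem_finite (not_infinite.1 hq)

end PlaneUniformFiniteness

section HereditarilyPiecewiseConst

variable {L : FirstOrder.Language} {M : Type u} [L.Structure M] [TopologicalSpace M]
  {Γ Δ : Type u} [FinPower M Γ] [FinPower M Δ]

variable (L M) in
/-- The restrictions of `k` to all definable families of curves are locally constant off a definable
family of finite sets. These are the integer invariants that can be bounded by induction on the
dimension of `Γ`. -/
structure HereditarilyPiecewiseConst (k : Γ → ℕ) : Prop where
  isDefinablePred_eq : ∀ n, IsDefinablePred L M fun g => k g = n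
  exists_isDefinableFamily : ∀ {Δ : Type u} [FinPower M Δ] (F : Δ × M → Γ), IsDefinableMap L M F →
    ∃ B : Δ → Set M, IsDefinableFamily L M B ∧ (∀ d, (B d).Finite) ∧
      ∀ d, ∀ q ∉ B d, IsLocallyConstAt (fun q' => k (F (d, q'))) q

namespace HereditarilyPiecewiseConst

theorem comp {k : Γ → ℕ} (hk : HereditarilyPiecewiseConst L M k) {f : Δ → Γ}
    (hf : IsDefinableMap L M f) : HereditarilyPiecewiseConst L M fun d => k (f d) where
  isDefinablePred_eq n := (hk.isDefinablePred_eq n).comp hf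
  exists_isDefinableFamily F hF := hk.exists_isDefinableFamily (fun z => f (F z)) (hf.comp hF)

variable [LinearOrder M] [OMinimalOrder L M] [OrderTopology M] [DenselyOrdered M] [NoMinOrder M]
  [NoMaxOrder M]

theorem ncard {Y : Γ → Set M} [hY : IsDefinableFamily L M Y] (hfin : ∀ g, (Y g).Finite) :
    HereditarilyPiecewiseConst L M fun g => (Y g).ncard where
  isDefinablePred_eq := .ncard_eq hfin
  exists_isDefinableFamily {Δ} _ F hF := by
    have hcurve : ∀ d, IsDefinableFamily L M fun q => Y (F (d, q)) := fun d => inferInstance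
    have : IsDefinableFamily L M fun w : (Δ × M) × M => Y (F (w.1.1, w.2)) := inferInstance
    have hreg : IsDefinablePred L M fun z : Δ × M => IsRegularOver (fun q => Y (F (z.1, q))) z.2 :=
      .isRegularOver (Y := fun (z : Δ × M) q => Y (F (z.1, q)))
    refine ⟨fun d => {q | ¬ IsRegularOver (fun q' => Y (F (d, q'))) q}, inferInstance, fun d => ?_,
      fun d q hq => ?_⟩
    · exact eventually_isRegularOver L fun q => hfin (F (d, q))
    · exact IsRegularOver.isLocallyConstAt_ncard L (fun q => hfin (F (d, q))) (not_not.1 hq)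

variable {k : Γ × M → ℕ} (hk : HereditarilyPiecewiseConst L M k) {U : Γ → Set M}
  [IsDefinableFamily L M U] {l : Γ → ℕ} (hl : ∀ p, ∀ q ∈ U p, k (p, q) = l p)
  (hl_empty : ∀ p, U p = ∅ → l p = 0)
include hk hl hl_empty

omit [LinearOrder M] [OMinimalOrder L M] [OrderTopology M] [DenselyOrdered M] [NoMinOrder M]
  [NoMaxOrder M] in
theorem isDefinablePred_eq_of_eq_on (n : ℕ) : IsDefinablePred L M fun p => l p = n := by
  have := hk.isDefinablePred_eq n
  refine .congr (P := fun p => (∃ q, q ∈ U p ∧ k (p, q) = n) ∨ ¬ (U p).Nonempty ∧ 0 = n)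
    inferInstance fun p => ?_
  rcases (U p).eq_empty_or_nonempty with h | h
  · simp [h, hl_empty p h]
  · simp only [h, not_true_eq_false, false_and, or_false]
    exact ⟨fun ⟨q, hq, hn⟩ => hl p q hq ▸ hn,
      fun hn => ⟨_, h.some_mem, (hl p _ h.some_mem).trans hn⟩⟩

theorem exists_isDefinableFamily_of_eq_on_isOpen (hopen : ∀ p, IsOpen (U p)) (F : Δ × M → Γ)
    [IsDefinableMap L M F] :
    ∃ B : Δ → Set M, IsDefinableFamily L M B ∧ (∀ d, (B d).Finite) ∧
      ∀ d, ∀ q ∉ B d, IsLocallyConstAt (fun q' => l (F (d, q'))) q := by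
  obtain ⟨B, hB, hBfin, hBlc⟩ := hk.exists_isDefinableFamily (Δ := Δ × M)
    (fun z => (F (z.1.1, z.2), z.1.2)) inferInstance
  let E : Δ × M → Set M := fun z =>
    {q | ¬ IsLocallyConstAt (fun q' => z.2 ∈ U (F (z.1, q'))) q ∨ q ∈ B z}
  have : IsDefinableFamily L M fun z => U (F z) := inferInstance
  have hE : IsDefinableFamily L M E := inferInstanceAs (IsDefinableFamily L M fun z : Δ × M =>
    {q | ¬ IsLocallyConstAt (fun q' => z.2 ∈ U (F (z.1, q'))) q ∨ q ∈ B z})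
  have hEfin : ∀ z, (E z).Finite := fun z => Set.Finite.union
    (IsDefinablePred.piecewiseConst L _).eventually_isLocallyConstAt (hBfin z)
  refine ⟨fun d => {q | ¬ (IsLocallyConstAt (fun q' => (U (F (d, q'))).Nonempty) q ∧
    ((U (F (d, q))).Nonempty → ∃ r, r ∈ U (F (d, q)) ∧ q ∉ E (d, r)))}, inferInstance,
    fun d => ?_, fun d q hq => ?_⟩
  · exact (IsDefinablePred.piecewiseConst L _).eventually_isLocallyConstAt.and
      (eventually_exists_mem_of_isOpen L (fun r => hEfin (d, r)) fun q => hopen (F (d, q)))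
  · obtain ⟨hne_lc, hgood⟩ := not_not.1 hq
    rcases (U (F (d, q))).eq_empty_or_nonempty with hempty | hne
    · filter_upwards [hne_lc] with q' hq'
      have : U (F (d, q')) = ∅ := by simpa [hempty, not_nonempty_iff_eq_empty] using hq'
      rw [hl_empty _ this, hl_empty _ hempty]
    · obtain ⟨r, hr, hrE⟩ := hgood hne
      simp only [E, mem_ofPred_eq, not_or, not_not] at hrE
      filter_upwards [hrE.1, hBlc (d, r) q hrE.2] with q' hmem hkq
      rw [← hl _ r (hmem ▸ hr), ← hl _ r hr, hkq]

theorem of_eq_on_isOpen (hopen : ∀ p, IsOpen (U p)) : HereditarilyPiecewiseConst L M l where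
  isDefinablePred_eq := isDefinablePred_eq_of_eq_on hk hl hl_empty
  exists_isDefinableFamily F _ := exists_isDefinableFamily_of_eq_on_isOpen hk hl hl_empty hopen F

end HereditarilyPiecewiseConst

end HereditarilyPiecewiseConst

section UniformFiniteness

theorem injOn_ncard_inter_Iio {M : Type*} [LinearOrder M] {s : Set M} (hs : s.Finite) :
    InjOn (fun q => (s ∩ Iio q).ncard) s := by
  refine StrictMonoOn.injOn fun q hq q' _ hlt => ncard_lt_ncard ?_ (hs.inter_of_left _)
  exact ⟨inter_subset_inter_right _ (Iio_subset_Iio hlt.le), fun h => (h ⟨hq, hlt⟩).2.false⟩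

theorem notMem_of_mem_uIcc_of_ncard_inter_Iio_eq {M : Type*} [LinearOrder M] {s : Set M}
    (hs : s.Finite) {q q' z : M} (hq : q ∉ s) (hq' : q' ∉ s)
    (hcard : (s ∩ Iio q).ncard = (s ∩ Iio q').ncard) (hz : z ∈ uIcc q q') : z ∉ s := by
  wlog hle : q ≤ q' generalizing q q'
  · exact this hq' hq hcard.symm (uIcc_comm q q' ▸ hz) (le_of_not_ge hle)
  intro hzs
  rw [uIcc_of_le hle] at hz
  have heq : s ∩ Iio q = s ∩ Iio q' := eq_of_subset_of_ncard_le
    (inter_subset_inter_right _ (Iio_subset_Iio hle)) hcard.ge (hs.inter_of_left _)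
  have hzq : z ∈ s ∩ Iio q := heq ▸ ⟨hzs, hz.2.lt_of_ne fun h => hq' (h ▸ hzs)⟩
  exact hzq.2.not_ge hz.1

theorem isOpen_setOf_notMem_and_ncard_inter_Iio_eq {M : Type*} [LinearOrder M]
    [TopologicalSpace M] [OrderTopology M] {s : Set M} (hs : s.Finite) (i : ℕ) :
    IsOpen {q | q ∉ s ∧ (s ∩ Iio q).ncard = i} := by
  refine isOpen_iff_mem_nhds.2 fun q ⟨hq, hi⟩ => ?_
  have same_side : ∀ᶠ q' in 𝓝 q, ∀ b ∈ s, (b < q' ↔ b < q) :=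
    (eventually_all_finite hs).2 fun b hb => by
      rcases (ne_of_mem_of_not_mem hb hq).lt_or_gt with h | h
      · filter_upwards [eventually_gt_nhds h] with q' hq' using iff_of_true hq' h
      · filter_upwards [eventually_lt_nhds h] with q' hq' using iff_of_false hq'.not_gt h.not_gt
  filter_upwards [same_side, hs.isClosed.isOpen_compl.mem_nhds hq] with q' hside hq'
  refine ⟨hq', hi ▸ congrArg ncard (Set.ext fun b => and_congr_right (hside b))⟩

variable {L : FirstOrder.Language} {M : Type u} [L.Structure M] [TopologicalSpace M] [LinearOrder M]
  [OMinimalOrder L M]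

namespace HereditarilyPiecewiseConst

variable {Γ : Type u} [FinPower M Γ]
  (hΓ : ∀ l : Γ → ℕ, HereditarilyPiecewiseConst L M l → BddAbove (range l))
  {k : Γ × M → ℕ} (hk : HereditarilyPiecewiseConst L M k)
  {B : Γ → Set M} [IsDefinableFamily L M B] (hB : ∀ p, (B p).Finite)
include hΓ hk hB

theorem bddAbove_image_setOf_mem (i : ℕ) :
    BddAbove (k '' {z | z.2 ∈ B z.1 ∧ (B z.1 ∩ Iio z.2).ncard = i}) := by
  obtain _ | _ := isEmpty_or_nonempty M
  · simp [Set.eq_empty_of_isEmpty]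
  let R : Γ → M → Prop := fun p q => q ∈ B p ∧ (B p ∩ Iio q).ncard = i
  have huniq : ∀ p q q', R p q → R p q' → q = q' := fun p q q' hq hq' =>
    injOn_ncard_inter_Iio (hB p) hq.1 hq'.1 (hq.2.trans hq'.2.symm)
  have hrank : IsDefinablePred L M fun z : Γ × M => (B z.1 ∩ Iio z.2).ncard = i :=
    .ncard_eq (fun z : Γ × M => (hB z.1).inter_of_left _) i
  have hR : IsDefinablePred L M fun z : Γ × M => R z.1 z.2 := .and
  have hmap : IsDefinableMap L M fun p => (p, Classical.epsilon (R p)) :=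
    .prodMk (hh := .epsilon huniq)
  refine (hΓ _ (hk.comp hmap)).mono ?_
  rintro _ ⟨⟨p, q⟩, hq, rfl⟩
  exact ⟨p, congrArg (k ⟨p, ·⟩) (huniq p _ q (Classical.epsilon_spec ⟨q, hq⟩) hq)⟩

variable [OrderTopology M] [DenselyOrdered M] [NoMinOrder M] [NoMaxOrder M]

theorem bddAbove_image_setOf_notMem
    (hlc : ∀ p, ∀ q ∉ B p, IsLocallyConstAt (fun q' => k (p, q')) q) (i : ℕ) :
    BddAbove (k '' {z | z.2 ∉ B z.1 ∧ (B z.1 ∩ Iio z.2).ncard = i}) := by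
  classical
  let U : Γ → Set M := fun p => {q | q ∉ B p ∧ (B p ∩ Iio q).ncard = i}
  have hrank : IsDefinablePred L M fun z : Γ × M => (B z.1 ∩ Iio z.2).ncard = i :=
    .ncard_eq (fun z : Γ × M => (hB z.1).inter_of_left _) i
  have hU : IsDefinableFamily L M U := inferInstanceAs (IsDefinableFamily L M fun p =>
    {q | q ∉ B p ∧ (B p ∩ Iio q).ncard = i})
  have hpc : ∀ p, PiecewiseConst fun q => k (p, q) := fun p => by
    refine .of_fibers (fun n => ?_) ((hB p).subset fun q hq => not_imp_comm.1 (hlc p q) hq)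
    have := (hk.isDefinablePred_eq n).comp (IsDefinableMap.prodMk_left p)
    exact IsDefinablePred.piecewiseConst L _
  have hconst : ∀ p, ∀ q ∈ U p, ∀ q' ∈ U p, k (p, q) = k (p, q') := fun p q hq q' hq' =>
    (hpc p).eq_of_isLocallyConstAt fun z hz => hlc p z <|
      notMem_of_mem_uIcc_of_ncard_inter_Iio_eq (hB p) hq.1 hq'.1 (hq.2.trans hq'.2.symm) hz
  let l : Γ → ℕ := fun p => if h : (U p).Nonempty then k (p, h.some) else 0
  have hl : ∀ p, ∀ q ∈ U p, k (p, q) = l p := fun p q hq => by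
    have hne : (U p).Nonempty := ⟨q, hq⟩
    simpa only [l, dif_pos hne] using hconst p q hq _ hne.some_mem
  have hl_empty : ∀ p, U p = ∅ → l p = 0 := fun p hp => by simp [l, hp]
  refine (hΓ l <| hk.of_eq_on_isOpen hl hl_empty fun p =>
    isOpen_setOf_notMem_and_ncard_inter_Iio_eq (hB p) i).mono ?_
  rintro _ ⟨⟨p, q⟩, hq, rfl⟩
  exact ⟨p, (hl p q hq).symm⟩

omit hB in
theorem bddAbove_range_prod : BddAbove (range k) := by
  obtain ⟨B, hBdef, hB, hlc⟩ := hk.exists_isDefinableFamily (fun z : Γ × M => z) .id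
  obtain ⟨N, hN⟩ := hΓ _ (.ncard hB)
  have hrank : ∀ i ∈ Set.Iic N, BddAbove (k '' {z | (B z.1 ∩ Iio z.2).ncard = i}) := fun i _ => by
    refine ((bddAbove_image_setOf_mem hΓ hk hB i).union
      (bddAbove_image_setOf_notMem hΓ hk hB hlc i)).mono ?_
    rw [← image_union]
    exact image_mono fun z hz => (em (z.2 ∈ B z.1)).imp (⟨·, hz⟩) (⟨·, hz⟩)
  refine (((finite_Iic N).bddAbove_biUnion).2 hrank).mono ?_
  rintro _ ⟨z, rfl⟩
  have hle : (B z.1 ∩ Iio z.2).ncard ≤ N :=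
    (ncard_le_ncard inter_subset_left (hB z.1)).trans (hN (mem_range_self z.1))
  exact mem_biUnion hle (mem_image_of_mem k rfl)

omit hΓ hk hB in
theorem bddAbove_range {n : ℕ} {k : (Fin n → M) → ℕ} (hk : HereditarilyPiecewiseConst L M k) :
    BddAbove (range k) := by
  induction n with
  | zero => exact (Set.finite_range k).bddAbove
  | succ n ih =>
    refine (bddAbove_range_prod (fun _ => ih) (hk.comp .finSnoc)).mono ?_
    rintro _ ⟨c, rfl⟩
    exact ⟨(Fin.init c, c (Fin.last n)), congrArg k (Fin.snoc_init_self c)⟩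

end HereditarilyPiecewiseConst

variable (L) [OrderTopology M] [DenselyOrdered M] [NoMinOrder M] [NoMaxOrder M] in
include L in
theorem exists_forall_ncard_le {n : ℕ} {Y : (Fin n → M) → Set M} [IsDefinableFamily L M Y]
    (hfin : ∀ c, (Y c).Finite) : ∃ N, ∀ c, (Y c).ncard ≤ N := by
  obtain ⟨N, hN⟩ := (HereditarilyPiecewiseConst.ncard (L := L) hfin).bddAbove_range
  exact ⟨N, forall_mem_range.1 hN⟩

end UniformFiniteness

section Closure

theorem closure_sdiff_subset_setOf_not_isLocallyConstAt {M : Type*} [TopologicalSpace M]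
    (s : Set M) : closure s \ s ⊆ {t | ¬ IsLocallyConstAt (· ∈ s) t} := by
  intro t ⟨hcl, hts⟩ hlc
  obtain ⟨y, hys, hy⟩ := ((mem_closure_iff_frequently.1 hcl).and_eventually hlc).exists
  exact hts (hy.mp hys)

theorem mk_closure_le_add_of_ncard_le {M : Type u} [TopologicalSpace M] {s : Set M} {k : ℕ}
    (hfin : (closure s \ s).Finite) (hk : (closure s \ s).ncard ≤ k) : #(closure s) ≤ #s + k :=
  calc #(closure s) = #↥(s ∪ closure s \ s) := by rw [union_sdiff_cancel subset_closure]
    _ ≤ #s + #↥(closure s \ s) := mk_union_le _ _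
    _ = #s + (closure s \ s).ncard := by rw [cast_ncard hfin]
    _ ≤ #s + k := by gcongr

variable (L : FirstOrder.Language) {M : Type u} [L.Structure M] [LinearOrder M] [OMinimalOrder L M]
  [TopologicalSpace M] [OrderTopology M] [DenselyOrdered M] [NoMinOrder M] [NoMaxOrder M]
include L

theorem exists_forall_ncard_closure_sdiff_le {n : ℕ} {Y : (Fin n → M) → Set M}
    [hY : IsDefinableFamily L M Y] :
    ∃ k, ∀ c, (closure (Y c) \ Y c).Finite ∧ (closure (Y c) \ Y c).ncard ≤ k := by
  let jumps : (Fin n → M) → Set M := fun c => {t | ¬ IsLocallyConstAt (· ∈ Y c) t}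
  have : IsDefinableFamily L M jumps :=
    inferInstanceAs (IsDefinableFamily L M fun c => {t | ¬ IsLocallyConstAt (· ∈ Y c) t})
  have jumps_finite : ∀ c, (jumps c).Finite := fun c =>
    have : IsDefinablePred L M (· ∈ Y c) := hY.isDefinablePred_mem.comp (.prodMk_left c)
    (IsDefinablePred.piecewiseConst L _).eventually_isLocallyConstAt
  obtain ⟨k, hk⟩ := exists_forall_ncard_le L jumps_finite
  refine ⟨k, fun c => ?_⟩
  have hsub : closure (Y c) \ Y c ⊆ jumps c := closure_sdiff_subset_setOf_not_isLocallyConstAt _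
  exact ⟨(jumps_finite c).subset hsub, (ncard_le_ncard hsub (jumps_finite c)).trans (hk c)⟩

end Closure

end OMinimal

open OMinimal

/-- If `M` is o-minimal and `A ⊆ M^(n+1)` is definable, then there is a `k : ℕ` such that for
every `c ∈ M^n` the fiber `A_c = {t : (c,t) ∈ A}` satisfies: `cl(A_c) \ A_c` has at most `k`
elements (`cl` being closure in the order topology on `M`); in particular
`|cl(A_c)| ≤ |A_c| + k`. -/
theorem closure_fiber_card_bound {L : FirstOrder.Language.{u, u}} {M : Type u} [L.Structure M]
    [LinearOrder M] [TopologicalSpace M] [OrderTopology M] (hM : IsOMinimal L M) {n : ℕ}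
    (A : Set (Fin (n + 1) → M)) (hAdef : (Set.univ : Set M).Definable L A) :
    ∃ k : ℕ, ∀ c : Fin n → M,
      ((closure {t : M | Fin.snoc c t ∈ A} \ {t : M | Fin.snoc c t ∈ A}).Finite ∧
        (closure {t : M | Fin.snoc c t ∈ A} \ {t : M | Fin.snoc c t ∈ A}).ncard ≤ k) ∧
      #(closure {t : M | Fin.snoc c t ∈ A}) ≤ #{t : M | Fin.snoc c t ∈ A} + k := by
  have := hM.denselyOrdered
  have := hM.noMinOrder
  have := hM.noMaxOrder
  have := OMinimalOrder.of_isOMinimal hM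
  have hA : IsDefinablePred L M (· ∈ A) := ⟨hAdef⟩
  have : IsDefinableFamily L M fun c : Fin n → M => {t | Fin.snoc c t ∈ A} :=
    ⟨hA.comp .finSnoc⟩
  obtain ⟨k, hk⟩ := exists_forall_ncard_closure_sdiff_le L
    (Y := fun c : Fin n → M => {t | Fin.snoc c t ∈ A})
  exact ⟨k, fun c => ⟨hk c, mk_closure_le_add_of_ncard_le (hk c).1 (hk c).2⟩⟩
end

section
/- Let M be an o-minimal structure and let A ⊆ M^{n+1} be an infinite definable set. Let π : M^{n+1} → M^n be the projection onto the first n coordinates, for c ∈ M^n let A_c = {t ∈ M : (c,t) ∈ A}, and set Ā = {(c,t) : c ∈ π(A), t ∈ cl(A_c)}, where cl denotes closure in the order topology on M. Then Ā is definable and |Ā| = |A|. -/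
open FirstOrder FirstOrder.Language Set Cardinal Filter Topology

universe u

/-- For `A ⊆ M^(n+1)`, the set `Ā = {(c,t) : c ∈ π(A), t ∈ cl(A_c)}`, where `π` is the
projection to the first `n` coordinates, `A_c = {t : (c,t) ∈ A}` is the fiber over `c`, and
`cl` denotes closure in the order topology on `M`. -/
def fiberwiseClosure {M : Type*} [TopologicalSpace M] {n : ℕ}
    (A : Set (Fin (n + 1) → M)) : Set (Fin (n + 1) → M) :=
  {x | (∃ t : M, Fin.snoc (Fin.init x) t ∈ A) ∧
    x (Fin.last n) ∈ closure {t : M | Fin.snoc (Fin.init x) t ∈ A}}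

/-!
In any linear order, `x ∈ cl S` iff `x` is the supremum of the nonempty set `S ∩ (-∞, x]` or the
infimum of the nonempty set `S ∩ [x, +∞)`. This is a first-order condition on `<`, so the fiberwise
closure is definable. For the cardinality, a point of `cl C \ C` with `C` convex is the supremum or
the infimum of `C`, so the finitely many convex pieces of a fiber `A_c` leave only finitely many
points in `cl(A_c) \ A_c`. Thus `Ā \ A` projects to `π(A)` with countable fibers, and
`|Ā \ A| ≤ |π(A)| · ℵ₀ ≤ |A|`.
-/

section Order

/-- `x` is an `r`-limit of `S`: the set `{y ∈ S | r y x}` is nonempty and `x` is its least upper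
bound with respect to `r`. Taking `≤` and `≥` for `r` gives the limits from below and from above, so
that both are treated by one definability argument. -/
def IsRelLimit {M : Type*} (r : M → M → Prop) (S : Set M) (x : M) : Prop :=
  (∃ y, y ∈ S ∧ r y x) ∧ ∀ b, (∀ y, y ∈ S ∧ r y x → r y b) → r x b

variable {M : Type*} [Preorder M] {S : Set M} {x : M}

theorem isRelLimit_le_iff :
    IsRelLimit (· ≤ ·) S x ↔ (S ∩ Iic x).Nonempty ∧ IsLUB (S ∩ Iic x) x :=
  and_congr_right fun _ => ⟨fun h => ⟨fun _ hy => hy.2, fun _ hb => h _ fun _ hy => hb hy⟩,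
    fun h _ hb => h.2 hb⟩

theorem isRelLimit_ge_iff :
    IsRelLimit (· ≥ ·) S x ↔ (S ∩ Ici x).Nonempty ∧ IsGLB (S ∩ Ici x) x :=
  isRelLimit_le_iff (M := Mᵒᵈ)

theorem ordConnected_withBot_lt_and_lt_withTop (a : WithBot M) (b : WithTop M) :
    {x : M | a < (x : WithBot M) ∧ (x : WithTop M) < b}.OrdConnected :=
  (ordConnected_Ioi.preimage_mono WithBot.coe_mono).inter
    (ordConnected_Iio.preimage_mono WithTop.coe_mono)

end Order

section Closure

variable {M : Type*} [LinearOrder M] [TopologicalSpace M] [OrderTopology M] {S : Set M} {x : M}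

theorem mem_closure_iff_isRelLimit :
    x ∈ closure S ↔ IsRelLimit (· ≤ ·) S x ∨ IsRelLimit (· ≥ ·) S x := by
  rw [isRelLimit_le_iff, isRelLimit_ge_iff]
  constructor
  · intro hx
    have hsplit : S = S ∩ Iic x ∪ S ∩ Ici x := by
      rw [← inter_union_distrib_left, Iic_union_Ici, inter_univ]
    rw [hsplit, closure_union] at hx
    exact hx.imp
      (fun h => ⟨closure_nonempty_iff.mp ⟨x, h⟩, isLUB_of_mem_closure (fun _ hy => hy.2) h⟩)
      (fun h => ⟨closure_nonempty_iff.mp ⟨x, h⟩, isGLB_of_mem_closure (fun _ hy => hy.2) h⟩)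
  · rintro (⟨hne, hlub⟩ | ⟨hne, hglb⟩)
    · exact closure_mono inter_subset_left (hlub.mem_closure hne)
    · exact closure_mono inter_subset_left (hglb.mem_closure hne)

theorem finite_closure_diff_of_ordConnected (hS : S.OrdConnected) : (closure S \ S).Finite := by
  have hlub : {x | IsLUB S x}.Finite := Subsingleton.finite fun _ hx _ hy => hx.unique hy
  have hglb : {x | IsGLB S x}.Finite := Subsingleton.finite fun _ hx _ hy => hx.unique hy
  refine (hlub.union hglb).subset ?_
  rintro x ⟨hcl, hxS⟩
  by_cases hub : x ∈ upperBounds S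
  · exact Or.inl (isLUB_of_mem_closure hub hcl)
  · refine Or.inr (isGLB_of_mem_closure (fun y hy => ?_) hcl)
    simp only [mem_upperBounds, not_forall, not_le] at hub
    obtain ⟨z, hz, hxz⟩ := hub
    by_contra! hyx
    exact hxS (hS.out hy hz ⟨hyx.le, hxz.le⟩)

theorem IsFinUnionPointsIntervals.finite_closure_diff (hS : IsFinUnionPointsIntervals S) :
    (closure S \ S).Finite := by
  obtain ⟨P, I, rfl⟩ := hS
  rw [closure_union, P.finite_toSet.isClosed.closure_eq, Finset.closure_biUnion]
  refine (I.finite_toSet.biUnion fun p _ => finite_closure_diff_of_ordConnected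
    (ordConnected_withBot_lt_and_lt_withTop p.1 p.2)).subset ?_
  rintro x ⟨hxP | hxI, hxS⟩
  · exact absurd (Or.inl hxP) hxS
  · obtain ⟨p, hp, hxp⟩ := mem_iUnion₂.mp hxI
    exact mem_biUnion hp ⟨hxp, fun hx => hxS (Or.inr (mem_biUnion hp hx))⟩

end Closure

section Fiber

variable {M : Type*} {n : ℕ}

/-- The fiber `A_c = {t | (c, t) ∈ A}` of `A ⊆ M^(n+1)` over `c ∈ M^n`. -/
def fiber (A : Set (Fin (n + 1) → M)) (c : Fin n → M) : Set M :=
  {t | Fin.snoc c t ∈ A}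

theorem mem_fiber_init_iff {A : Set (Fin (n + 1) → M)} {x : Fin (n + 1) → M} :
    x (Fin.last n) ∈ fiber A (Fin.init x) ↔ x ∈ A := by
  simp only [fiber, mem_ofPred_eq, Fin.snoc_init_self]

end Fiber

section Definability

variable {L : FirstOrder.Language} {M : Type*} [L.Structure M] {B : Set M} {α : Type*}

theorem definable_exists {p : (α → M) → M → Prop}
    (hp : B.Definable L {z : α ⊕ Unit → M | p (z ∘ Sum.inl) (z (Sum.inr ()))}) :
    B.Definable L {x : α → M | ∃ t, p x t} := by
  convert hp.exists_of_finite using 1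
  ext x
  exact ⟨fun ⟨t, ht⟩ => ⟨fun _ => t, ht⟩, fun ⟨u, hu⟩ => ⟨u (), hu⟩⟩

theorem definable_forall {p : (α → M) → M → Prop}
    (hp : B.Definable L {z : α ⊕ Unit → M | p (z ∘ Sum.inl) (z (Sum.inr ()))}) :
    B.Definable L {x : α → M | ∀ t, p x t} := by
  convert hp.forall_of_finite using 1
  ext x
  exact ⟨fun h u => h (u ()), fun h t => h fun _ => t⟩

theorem definable_imp {p q : (α → M) → Prop} (hp : B.Definable L {x | p x})
    (hq : B.Definable L {x | q x}) : B.Definable L {x | p x → q x} := by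
  convert hp.compl.union hq using 1
  ext x
  exact imp_iff_not_or

theorem definable_rel_apply {r : M → M → Prop}
    (hr : B.Definable L {x : Fin 2 → M | r (x 0) (x 1)}) (i j : α) :
    B.Definable L {x : α → M | r (x i) (x j)} :=
  hr.preimage_comp ![i, j]

variable {n : ℕ} {A : Set (Fin (n + 1) → M)}

theorem definable_mem_fiber (hA : B.Definable L A) {f : (α → M) → Fin n → M}
    (hf : B.DefinableMap L f) (j : α) : B.Definable L {x : α → M | x j ∈ fiber A (f x)} := by
  refine hA.preimage_map (F := fun x => Fin.snoc (f x) (x j)) fun i => ?_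
  induction i using Fin.lastCases with
  | last => simpa only [Fin.snoc_last] using DefinableFun.proj L
  | cast i => simpa only [Fin.snoc_castSucc] using hf i

theorem definable₁_fiber (hA : B.Definable L A) (c : Fin n → M) (hc : ∀ i, c i ∈ B) :
    B.Definable₁ L (fiber A c) :=
  definable_mem_fiber (f := fun _ => c) hA (fun i => L.definableFun_const (Fin 1) (hc i)) 0

theorem definable_isRelLimit_fiber {r : M → M → Prop}
    (hr : B.Definable L {x : Fin 2 → M | r (x 0) (x 1)}) (hA : B.Definable L A) :
    B.Definable L {x | IsRelLimit r (fiber A (Fin.init x)) (x (Fin.last n))} := by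
  have h_mem_and_rel {β : Type} (ι : Fin (n + 1) → β) (y : β) : B.Definable L
      {z : β → M | z y ∈ fiber A (Fin.init (z ∘ ι)) ∧ r (z y) (z (ι (Fin.last n)))} :=
    (definable_mem_fiber hA (fun _ => DefinableFun.proj L) y).inter (definable_rel_apply hr _ _)
  refine (definable_exists (h_mem_and_rel Sum.inl _)).inter (definable_forall (definable_imp
    (definable_forall (definable_imp (h_mem_and_rel (Sum.inl ∘ Sum.inl) _) ?_)) ?_))
  · exact definable_rel_apply hr (Sum.inr ()) (Sum.inl (Sum.inr ()))
  · exact definable_rel_apply hr (Sum.inl (Fin.last n)) (Sum.inr ())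

end Definability

theorem mk_le_mul_aleph0_of_countable_fibers {α β : Type u} {f : α → β} {s : Set α} {t : Set β}
    (hf : MapsTo f s t) (hfiber : ∀ b ∈ t, (s ∩ f ⁻¹' {b}).Countable) : #s ≤ #t * ℵ₀ := by
  refine mk_le_mk_mul_of_mk_preimage_le (hf.restrict f s t) fun b => ?_
  rw [le_aleph0_iff_set_countable]
  refine ((hfiber b b.2).preimage Subtype.val_injective).mono ?_
  rintro x rfl
  exact ⟨x.2, rfl⟩

section FiberwiseClosure

variable {M : Type*} [TopologicalSpace M] {n : ℕ} {A : Set (Fin (n + 1) → M)}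
  {x : Fin (n + 1) → M}

theorem mem_fiberwiseClosure_iff :
    x ∈ fiberwiseClosure A ↔ x (Fin.last n) ∈ closure (fiber A (Fin.init x)) :=
  ⟨And.right, fun hx => ⟨closure_nonempty_iff.mp ⟨_, hx⟩, hx⟩⟩

theorem subset_fiberwiseClosure : A ⊆ fiberwiseClosure A := fun _ hx =>
  mem_fiberwiseClosure_iff.mpr (subset_closure (mem_fiber_init_iff.mpr hx))

theorem definable_fiberwiseClosure {L : FirstOrder.Language} [L.Structure M] [LinearOrder M]
    [OrderTopology M] {B : Set M} (hlt : B.Definable L {x : Fin 2 → M | x 0 < x 1})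
    (hA : B.Definable L A) : B.Definable L (fiberwiseClosure A) := by
  have hge : B.Definable L {x : Fin 2 → M | x 0 ≥ x 1} := by
    simpa only [compl_ofPred, not_lt] using! hlt.compl
  have hle : B.Definable L {x : Fin 2 → M | x 0 ≤ x 1} := definable_rel_apply hge 1 0
  convert (definable_isRelLimit_fiber hle hA).union (definable_isRelLimit_fiber hge hA) using 1
  ext x
  exact mem_fiberwiseClosure_iff.trans mem_closure_iff_isRelLimit

theorem mk_fiberwiseClosure_diff_le
    (hfiber : ∀ c, (closure (fiber A c) \ fiber A c).Countable) :
    #(fiberwiseClosure A \ A : Set _) ≤ #A * ℵ₀ := by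
  have hinit : MapsTo Fin.init (fiberwiseClosure A \ A) (Fin.init '' A : Set (Fin n → M)) := by
    rintro x ⟨⟨⟨t, ht⟩, -⟩, -⟩
    exact ⟨_, ht, Fin.init_snoc t (Fin.init x)⟩
  have hcount (c : Fin n → M) :
      ((fiberwiseClosure A \ A) ∩ Fin.init ⁻¹' {c}).Countable := by
    refine ((hfiber c).image (Fin.snoc (α := fun _ => M) c)).mono ?_
    rintro x ⟨⟨hcl, hxA⟩, rfl⟩
    exact ⟨x (Fin.last n), ⟨mem_fiberwiseClosure_iff.mp hcl, mt mem_fiber_init_iff.mp hxA⟩,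
      Fin.snoc_init_self x⟩
  calc #(fiberwiseClosure A \ A : Set _)
      ≤ #(Fin.init '' A : Set (Fin n → M)) * ℵ₀ :=
        mk_le_mul_aleph0_of_countable_fibers hinit fun c _ => hcount c
    _ ≤ #A * ℵ₀ := by gcongr; exact mk_image_le

theorem mk_fiberwiseClosure_eq (hA : A.Infinite)
    (hfiber : ∀ c, (closure (fiber A c) \ fiber A c).Countable) :
    #(fiberwiseClosure A) = #A := by
  have hA' : ℵ₀ ≤ #A := infinite_iff.mp hA.to_subtype
  refine le_antisymm ?_ (mk_le_mk_of_subset subset_fiberwiseClosure)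
  calc #(fiberwiseClosure A)
      ≤ #(fiberwiseClosure A \ A : Set _) + #A := le_mk_sdiff_add_mk _ _
    _ ≤ #A * ℵ₀ + #A := by gcongr; exact mk_fiberwiseClosure_diff_le hfiber
    _ = #A := by rw [mul_aleph0_eq hA', add_eq_self hA']

end FiberwiseClosure

theorem fiberwiseClosure_definable_and_card_eq_general {L : FirstOrder.Language} {M : Type*}
    [L.Structure M] [LinearOrder M] [TopologicalSpace M] [OrderTopology M] {B : Set M}
    (hlt : B.Definable L {x : Fin 2 → M | x 0 < x 1})
    (htame : ∀ s : Set M, (univ : Set M).Definable₁ L s → (closure s \ s).Countable)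
    {n : ℕ} {A : Set (Fin (n + 1) → M)} (hAdef : B.Definable L A) (hAinf : A.Infinite) :
    B.Definable L (fiberwiseClosure A) ∧ #(fiberwiseClosure A) = #A :=
  ⟨definable_fiberwiseClosure hlt hAdef, mk_fiberwiseClosure_eq hAinf fun c =>
    htame _ (definable₁_fiber (hAdef.mono (subset_univ B)) c fun i => mem_univ (c i))⟩

/-- If `M` is o-minimal and `A ⊆ M^(n+1)` is an infinite definable set, then the set
`Ā = {(c,t) : c ∈ π(A), t ∈ cl(A_c)}` is definable and `|Ā| = |A|`. -/
theorem fiberwiseClosure_definable_and_card_eq {L : FirstOrder.Language.{u, u}} {M : Type u}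
    [L.Structure M] [LinearOrder M] [TopologicalSpace M] [OrderTopology M]
    (hM : IsOMinimal L M) {n : ℕ} (A : Set (Fin (n + 1) → M))
    (hAdef : (Set.univ : Set M).Definable L A) (hAinf : A.Infinite) :
    (Set.univ : Set M).Definable L (fiberwiseClosure A) ∧
      #(fiberwiseClosure A) = #A :=
  fiberwiseClosure_definable_and_card_eq_general
    (hM.definable_lt.mono (empty_subset univ))
    (fun s hs => (hM.tame s hs).finite_closure_diff.countable) hAdef hAinf
end
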